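/- arXiv:1502.00825 — 6 statements merged into one kernel-verified Lean document; each statement's English description precedes it below -/
import Mathlib

section
/- Let s : ℤ × ℤ → ℂ. Then s is positive semidefinite on the *-semigroup ℤ² — i.e. for every r ∈ ℕ, all ξ₁,…,ξ_r ∈ ℤ × ℤ and all c₁,…,c_r ∈ ℂ, the sum Σ_{i,j=1}^{r} c_i · conj(c_j) · s(ξ_i* + ξ_j) is a nonnegative real number, where (m,n)* := (n,m) — if and only if there exists a positive Borel measure μ on ℂ with μ({0}) = 0 such that for all (m,n) ∈ ℤ × ℤ the function z ↦ z^m · conj(z)^n (defined for z ≠ 0, using integer powers) is μ-integrable and s(m,n) = ∫_{ℂ∖{0}} z^m · conj(z)^n dμ(z). -/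
open Polynomial in
lemma bsg_nonneg_of_ne (Q : ℝ[X]) (a : ℝ) (h : ∀ x, x ≠ a → 0 ≤ Q.eval x) (x : ℝ) :
    0 ≤ Q.eval x := by
  by_cases hx : x = a
  · subst hx
    have ht : Filter.Tendsto (fun y => Q.eval y) (nhdsWithin x {x}ᶜ) (nhds (Q.eval x)) :=
      Q.continuous.continuousAt.tendsto.mono_left nhdsWithin_le_nhds
    refine ge_of_tendsto ht ?_
    filter_upwards [self_mem_nhdsWithin] with y hy using h y hy
  · exact h x hx

open Polynomial in
lemma bsg_two_sq (n : ℕ) : ∀ Q : ℝ[X], Q.natDegree ≤ n → (∀ x, 0 ≤ Q.eval x) →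
    ∃ A B : ℝ[X], Q = A ^ 2 + B ^ 2 := by
  induction n using Nat.strong_induction_on with
  | _ n ih =>
  intro Q hn hQ
  by_cases h0 : Q.natDegree = 0
  · obtain ⟨c, rfl⟩ := natDegree_eq_zero.1 h0
    refine ⟨C (√c), 0, ?_⟩
    have : 0 ≤ c := by simpa using hQ 0
    rw [← C_pow, Real.sq_sqrt this]; simp
  have hQ0 : Q ≠ 0 := by rintro rfl; simp at h0
  obtain ⟨z, hz⟩ := IsAlgClosed.exists_aeval_eq_zero ℂ Q (by
    intro h; exact h0 (natDegree_eq_of_degree_eq_some h))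
  by_cases him : z.im = 0
  · have hzr : z = ((z.re : ℝ) : ℂ) := by apply Complex.ext <;> simp [him]
    set a := z.re
    have hr : Q.eval a = 0 := by
      rw [hzr] at hz
      have h2 : aeval (algebraMap ℝ ℂ a) Q = 0 := hz
      rw [aeval_algebraMap_apply] at h2
      simpa using h2
    obtain ⟨R, hR⟩ := dvd_iff_isRoot.2 hr
    have hRa : R.eval a = 0 := by
      have hc := R.continuous.continuousAt (x := a)
      apply le_antisymm
      · refine le_of_tendsto (hc.tendsto.mono_left (nhdsWithin_le_nhds (s := Set.Iio a))) ?_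
        filter_upwards [self_mem_nhdsWithin] with y hy
        have h1 := hQ y
        rw [hR] at h1
        simp at h1 hy
        nlinarith
      · refine ge_of_tendsto (hc.tendsto.mono_left (nhdsWithin_le_nhds (s := Set.Ioi a))) ?_
        filter_upwards [self_mem_nhdsWithin] with y hy
        have h1 := hQ y
        rw [hR] at h1
        simp at h1 hy
        nlinarith
    obtain ⟨S, hS⟩ := dvd_iff_isRoot.2 hRa
    have hQS : Q = (X - C a) ^ 2 * S := by rw [hR, hS]; ring
    have hdeg : Q.natDegree = 2 + S.natDegree := by
      have hS0 : S ≠ 0 := by rintro rfl; simp at hQS; exact hQ0 hQS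
      rw [hQS, ((monic_X_sub_C a).pow 2).natDegree_mul' hS0, (monic_X_sub_C a).natDegree_pow]
      simp
    obtain ⟨A, B, hAB⟩ := ih S.natDegree (by omega) S le_rfl (bsg_nonneg_of_ne S a (by
      intro x hx
      have h1 := hQ x
      rw [hQS] at h1
      simp only [eval_mul, eval_pow, eval_sub, eval_X, eval_C] at h1
      have : 0 < (x - a) ^ 2 := by have := sub_ne_zero.2 hx; positivity
      exact nonneg_of_mul_nonneg_right h1 this))
    exact ⟨(X - C a) * A, (X - C a) * B, by rw [hQS, hAB]; ring⟩
  · obtain ⟨S, hS⟩ := quadratic_dvd_of_aeval_eq_zero_im_ne_zero Q hz him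
    have hq : (X ^ 2 - C (2 * z.re) * X + C (‖z‖ ^ 2) : ℝ[X]) = (X - C z.re) ^ 2 + (C z.im) ^ 2 := by
      rw [Complex.sq_norm, Complex.normSq_apply]
      simp only [map_add, map_mul, C_ofNat]
      ring
    have hdq : (X ^ 2 - C (2 * z.re) * X + C (‖z‖ ^ 2) : ℝ[X]).natDegree = 2 := by
      compute_degree!
    have hq0 : (X ^ 2 - C (2 * z.re) * X + C (‖z‖ ^ 2) : ℝ[X]) ≠ 0 := by
      intro h; rw [h] at hdq; simp at hdq
    have hdeg : Q.natDegree = 2 + S.natDegree := by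
      have hS0 : S ≠ 0 := by rintro rfl; simp at hS; exact hQ0 hS
      rw [hS, natDegree_mul hq0 hS0, hdq]
    obtain ⟨A, B, hAB⟩ := ih S.natDegree (by omega) S le_rfl (by
      intro x
      have h1 := hQ x
      rw [hS, hq] at h1
      simp only [eval_mul, eval_pow, eval_sub, eval_X, eval_C, eval_add] at h1
      have : 0 < (x - z.re) ^ 2 + z.im ^ 2 := by positivity
      exact nonneg_of_mul_nonneg_right h1 this)
    refine ⟨(X - C z.re) * A - C z.im * B, (X - C z.re) * B + C z.im * A, ?_⟩
    rw [hS, hq, hAB]; ring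

open Polynomial in
lemma bsg_one_dim (l : ℤ → ℝ)
    (hl : ∀ (F : Finset ℕ) (c : ℕ → ℝ) (K : ℤ),
      0 ≤ ∑ i ∈ F, ∑ j ∈ F, c i * c j * l ((i - K) + (j - K)))
    {ι : Type*} (S : Finset ι) (b : ι → ℝ) (k : ι → ℤ)
    (hb : ∀ t : ℝ, t ≠ 0 → 0 ≤ ∑ x ∈ S, b x * t ^ (k x)) :
    0 ≤ ∑ x ∈ S, b x * l (k x) := by
  obtain ⟨K, hK⟩ : ∃ K : ℕ, ∀ x ∈ S, 0 ≤ k x + 2 * K := by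
    refine ⟨∑ x ∈ S, (k x).natAbs, fun x hx => ?_⟩
    have : (k x).natAbs ≤ ∑ x ∈ S, (k x).natAbs :=
      Finset.single_le_sum (f := fun x => (k x).natAbs) (fun _ _ => Nat.zero_le _) hx
    omega
  set Q : ℝ[X] := ∑ x ∈ S, monomial (k x + 2 * K).toNat (b x) with hQ
  let Λ : ℝ[X] →ₗ[ℝ] ℝ := Polynomial.lsum fun n => (l (n - 2 * K)) • LinearMap.id
  have hΛm : ∀ n c, Λ (monomial n c) = c * l (n - 2 * K) := by
    intro n c
    simp [Λ, Polynomial.lsum_apply, mul_comm]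
  have hΛsq : ∀ A : ℝ[X], 0 ≤ Λ (A ^ 2) := by
    intro A
    have h := hl A.support A.coeff K
    convert h using 1
    conv_lhs => rw [sq, A.as_sum_support, Finset.sum_mul_sum, map_sum]
    refine Finset.sum_congr rfl fun i _ => ?_
    rw [map_sum]
    refine Finset.sum_congr rfl fun j _ => ?_
    rw [monomial_mul_monomial, hΛm]
    congr 2
    push_cast; ring
  have hQn : ∀ x, 0 ≤ Q.eval x := by
    refine bsg_nonneg_of_ne Q 0 fun t ht => ?_
    have h1 := mul_nonneg (hb t ht) (by rw [pow_mul]; positivity : 0 ≤ t ^ (2 * K))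
    refine h1.trans_eq (Eq.symm ?_)
    rw [hQ, eval_finsetSum, Finset.sum_mul]
    refine Finset.sum_congr rfl fun x hx => ?_
    rw [eval_monomial, mul_assoc, ← zpow_natCast, ← zpow_natCast, ← zpow_add₀ ht,
      Int.toNat_of_nonneg (hK x hx)]
    push_cast; rfl
  obtain ⟨A, B, hAB⟩ := bsg_two_sq _ Q le_rfl hQn
  have h2 : 0 ≤ Λ Q := by
    rw [hAB, map_add]; exact add_nonneg (hΛsq A) (hΛsq B)
  convert h2 using 1
  rw [hQ, map_sum]
  refine Finset.sum_congr rfl fun x hx => ?_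
  rw [hΛm, Int.toNat_of_nonneg (hK x hx)]
  congr 2; ring

def BsgPSD (s : ℤ × ℤ → ℂ) : Prop := ∀ (r : ℕ) (ξ : Fin r → ℤ × ℤ) (c : Fin r → ℂ),
      (∑ i : Fin r, ∑ j : Fin r,
          c i * starRingEnd ℂ (c j) * s ((ξ i).swap + ξ j)).im = 0 ∧
      0 ≤ (∑ i : Fin r, ∑ j : Fin r,
          c i * starRingEnd ℂ (c j) * s ((ξ i).swap + ξ j)).re

lemma BsgPSD.finset {s : ℤ × ℤ → ℂ} (h : BsgPSD s) {ι : Type*} (S : Finset ι)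
    (ξ : ι → ℤ × ℤ) (c : ι → ℂ) :
    0 ≤ (∑ i ∈ S, ∑ j ∈ S, c i * starRingEnd ℂ (c j) * s ((ξ i).swap + ξ j)).re := by
  have h1 := (h S.card (fun i => ξ (S.equivFin.symm i)) (fun i => c (S.equivFin.symm i))).2
  convert h1 using 2
  rw [← Finset.sum_coe_sort S, ← Equiv.sum_comp S.equivFin.symm]
  refine Finset.sum_congr rfl fun i _ => ?_
  rw [← Finset.sum_coe_sort S, ← Equiv.sum_comp S.equivFin.symm]

lemma BsgPSD.herm {s : ℤ × ℤ → ℂ} (h : BsgPSD s) (x : ℤ × ℤ) :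
    s x.swap = starRingEnd ℂ (s x) := by
  have h1 := (h 2 ![0, x] ![1, 1]).1
  have h2 := (h 2 ![0, x] ![1, Complex.I]).1
  have h3 := (h 2 ![0, x] ![1, 0]).1
  have h4 := (h 2 ![0, x] ![0, 1]).1
  simp [Fin.sum_univ_two, -Prod.swap_add] at h1 h2 h3 h4
  apply Complex.ext
  · simp; linarith
  · simp; linarith

/-- Extension of `s` to the group of pairs (power of `t`, power of `u`). -/
noncomputable def bsgσ (s : ℤ × ℤ → ℂ) (k l : ℤ) : ℂ :=
  if (k - l) % 2 = 0 then s ((k + l) / 2, (k - l) / 2) else 0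

lemma bsgσ_apply (s : ℤ × ℤ → ℂ) (x : ℤ × ℤ) : bsgσ s (x.1 + x.2) (x.1 - x.2) = s x := by
  unfold bsgσ
  rw [if_pos (by omega)]
  congr 1
  ext <;> simp <;> omega

lemma bsgσ_herm {s : ℤ × ℤ → ℂ} (h : BsgPSD s) (k l : ℤ) :
    bsgσ s k (-l) = starRingEnd ℂ (bsgσ s k l) := by
  unfold bsgσ
  by_cases hp : (k - l) % 2 = 0
  · rw [if_pos hp, if_pos (by omega), ← h.herm]
    congr 1
    ext <;> simp
    congr 1
  · rw [if_neg hp, if_neg (by omega)]; simp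

lemma bsgσ_psd {s : ℤ × ℤ → ℂ} (h : BsgPSD s) {ι : Type*} (S : Finset ι)
    (k l : ι → ℤ) (d : ι → ℂ) :
    0 ≤ (∑ x ∈ S, ∑ y ∈ S, d x * starRingEnd ℂ (d y) * bsgσ s (k x + k y) (l x - l y)).re := by
  have h0 := h.finset S (fun x => ((k x - l x) / 2, k x - (k x - l x) / 2))
    (fun x => if (k x - l x) % 2 = 0 then d x else 0)
  have h1 := h.finset S (fun x => ((k x - l x) / 2, k x - (k x - l x) / 2))
    (fun x => if (k x - l x) % 2 = 0 then 0 else d x)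
  have h2 := add_nonneg h0 h1
  rw [← Complex.add_re, ← Finset.sum_add_distrib] at h2
  refine h2.trans_eq (congrArg Complex.re (Eq.symm ?_))
  refine Finset.sum_congr rfl fun x _ => ?_
  rw [← Finset.sum_add_distrib]
  refine Finset.sum_congr rfl fun y _ => ?_
  unfold bsgσ
  by_cases hx : (k x - l x) % 2 = 0 <;> by_cases hy : (k y - l y) % 2 = 0
  · rw [if_pos (by omega)]; simp only [hx, hy, if_true, map_zero, mul_zero, zero_mul, add_zero]
    congr 2; ext <;> simp <;> omega
  · rw [if_neg (by omega)]; simp [hx, hy]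
  · rw [if_neg (by omega)]; simp [hx, hy]
  · rw [if_pos (by omega)]; simp only [hx, hy, if_false, map_zero, mul_zero, zero_mul, zero_add]
    congr 2; ext <;> simp <;> omega

/-- Evaluation of a Laurent polynomial in `z`, `conj z`. -/
noncomputable def bsgP (a : ℤ × ℤ →₀ ℂ) (z : ℂ) : ℂ :=
  Finsupp.linearCombination ℂ (fun x : ℤ × ℤ => z ^ x.1 * (starRingEnd ℂ z) ^ x.2) a

lemma bsg_fixed {s : ℤ × ℤ → ℂ} (h : BsgPSD s) (N : ℕ) (v : ℂ) (hv0 : v ≠ 0)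
    (hv : starRingEnd ℂ v = v⁻¹) (a : ℤ × ℤ →₀ ℂ) (ha : ∀ z, z ≠ 0 → 0 ≤ (bsgP a z).re) :
    0 ≤ (∑ x ∈ a.support, (a x * v ^ (x.1 - x.2)) *
      ∑ i ∈ Finset.range N, ∑ j ∈ Finset.range N,
        v ^ ((j : ℤ) - i) * bsgσ s (x.1 + x.2) (i - j)).re := by
  set lc : ℤ → ℂ := fun k => ∑ i ∈ Finset.range N, ∑ j ∈ Finset.range N,
        v ^ ((j : ℤ) - i) * bsgσ s k (i - j) with hlc
  have him : ∀ k, (lc k).im = 0 := by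
    intro k
    rw [← Complex.conj_eq_iff_im, hlc]
    simp only [map_sum, map_mul, map_zpow₀, hv, ← bsgσ_herm h]
    rw [Finset.sum_comm]
    refine Finset.sum_congr rfl fun i _ => Finset.sum_congr rfl fun j _ => ?_
    rw [inv_zpow', neg_sub, neg_sub]
  have hmain := bsg_one_dim (fun k => (lc k).re) ?_ a.support
    (fun x => (a x * v ^ (x.1 - x.2)).re) (fun x => x.1 + x.2) ?_
  · refine hmain.trans_eq ?_
    rw [Complex.re_sum]
    refine Finset.sum_congr rfl fun x _ => ?_
    change _ = (a x * v ^ (x.1 - x.2) * lc (x.1 + x.2)).re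
    rw [Complex.mul_re _ (lc _), him]; simp
  · intro F c K
    have h1 := bsgσ_psd h (F ×ˢ Finset.range N) (fun p => (p.1 : ℤ) - K) (fun p => (p.2 : ℤ))
      (fun p => (c p.1 : ℂ) * v ^ (-(p.2 : ℤ)))
    refine h1.trans_eq ?_
    rw [Finset.sum_product, Complex.re_sum]
    refine Finset.sum_congr rfl fun p _ => ?_
    simp only [Finset.sum_product]
    rw [Finset.sum_comm, Complex.re_sum]
    refine Finset.sum_congr rfl fun q _ => ?_
    rw [← Complex.re_ofReal_mul, hlc]
    congr 1
    rw [Finset.mul_sum]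
    refine Finset.sum_congr rfl fun i _ => ?_
    rw [Finset.mul_sum]
    refine Finset.sum_congr rfl fun j _ => ?_
    simp only [map_mul, Complex.conj_ofReal, map_zpow₀, hv]
    rw [inv_zpow', neg_neg, show (j : ℤ) - i = -i + j by ring, zpow_add₀ hv0]
    push_cast; ring
  · intro t ht
    refine (ha (t * v) (by simp [ht, hv0])).trans_eq ?_
    rw [bsgP, Finsupp.linearCombination_apply, Finsupp.sum, Complex.re_sum]
    refine Finset.sum_congr rfl fun x _ => ?_
    have ht' : (t : ℂ) ≠ 0 := by simpa using ht
    rw [mul_comm _ (t ^ _), ← Complex.re_ofReal_mul]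
    congr 1
    simp only [smul_eq_mul, map_mul, Complex.conj_ofReal, hv, mul_zpow, Complex.ofReal_zpow,
      inv_zpow', zpow_add₀ ht', sub_eq_add_neg, zpow_add₀ hv0]
    ring

lemma bsg_integral_exp (d : ℤ) :
    ∫ θ in (0 : ℝ)..(2 * Real.pi), Complex.exp (θ * Complex.I) ^ d =
      if d = 0 then (2 * Real.pi : ℂ) else 0 := by
  split_ifs with hd
  · simp [hd]
  · have hc : (d * Complex.I : ℂ) ≠ 0 := by simp [hd]
    have := integral_exp_mul_complex (a := 0) (b := 2 * Real.pi) hc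
    convert this using 1
    · congr 1; ext θ; rw [← Complex.exp_int_mul]; congr 1; ring
    · rw [eq_comm, div_eq_zero_iff]; left
      have : (d * Complex.I * ((2 * Real.pi : ℝ) : ℂ) : ℂ) = d * (2 * Real.pi * Complex.I) := by
        push_cast; ring
      rw [this, Complex.exp_int_mul_two_pi_mul_I]; simp

/-- Number of pairs in `[0,N)^2` with given difference. -/
def bsgCnt (N : ℕ) (d : ℤ) : ℕ :=
  ∑ i ∈ Finset.range N, ∑ j ∈ Finset.range N, if d + (j - i) = 0 then 1 else 0

lemma bsg_averaged {s : ℤ × ℤ → ℂ} (h : BsgPSD s) (N : ℕ)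
    (a : ℤ × ℤ →₀ ℂ) (ha : ∀ z, z ≠ 0 → 0 ≤ (bsgP a z).re) :
    0 ≤ (∑ x ∈ a.support, a x * s x * bsgCnt N (x.1 - x.2)).re := by
  set e : ℝ → ℂ := fun θ => Complex.exp (θ * Complex.I) with he
  have he0 : ∀ θ, e θ ≠ 0 := fun θ => Complex.exp_ne_zero _
  have hec : ∀ d : ℤ, Continuous fun θ => e θ ^ d := fun d =>
    Continuous.zpow₀ (by fun_prop) d (fun θ => Or.inl (he0 θ))
  have hestar : ∀ θ, starRingEnd ℂ (e θ) = (e θ)⁻¹ := by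
    intro θ
    rw [he]; simp only
    rw [← Complex.exp_conj, ← Complex.exp_neg]; simp
  set F : ℝ → ℂ := fun θ => ∑ x ∈ a.support, ∑ i ∈ Finset.range N, ∑ j ∈ Finset.range N,
     (a x * bsgσ s (x.1 + x.2) (i - j)) * e θ ^ (x.1 - x.2 + (j - i)) with hF
  have hFc : Continuous F := by
    refine continuous_finsetSum _ fun x _ => continuous_finsetSum _ fun i _ =>
      continuous_finsetSum _ fun j _ => continuous_const.mul (hec _)
  have hFpos : ∀ θ, 0 ≤ (F θ).re := by
    intro θ
    refine (bsg_fixed h N (e θ) (he0 θ) (hestar θ) a ha).trans_eq ?_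
    congr 1
    refine Finset.sum_congr rfl fun x _ => ?_
    rw [Finset.mul_sum]
    refine Finset.sum_congr rfl fun i _ => ?_
    rw [Finset.mul_sum]
    refine Finset.sum_congr rfl fun j _ => ?_
    rw [zpow_add₀ (he0 θ)]; ring
  have hFintegral : ∫ θ in (0 : ℝ)..(2 * Real.pi), F θ =
      (2 * Real.pi : ℝ) * ∑ x ∈ a.support, a x * s x * bsgCnt N (x.1 - x.2) := by
    rw [hF]
    rw [intervalIntegral.integral_finsetSum, Finset.mul_sum]
    swap
    · intro x _
      exact Continuous.intervalIntegrable (continuous_finsetSum _ fun i _ =>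
        continuous_finsetSum _ fun j _ => continuous_const.mul (hec _)) _ _
    refine Finset.sum_congr rfl fun x _ => ?_
    rw [intervalIntegral.integral_finsetSum, bsgCnt, Nat.cast_sum, Finset.mul_sum, Finset.mul_sum]
    swap
    · intro i _
      exact Continuous.intervalIntegrable (
        continuous_finsetSum _ fun j _ => continuous_const.mul (hec _)) _ _
    refine Finset.sum_congr rfl fun i _ => ?_
    rw [intervalIntegral.integral_finsetSum, Nat.cast_sum, Finset.mul_sum, Finset.mul_sum]
    swap
    · intro j _
      exact Continuous.intervalIntegrable (continuous_const.mul (hec _)) _ _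
    refine Finset.sum_congr rfl fun j _ => ?_
    rw [intervalIntegral.integral_const_mul, he, bsg_integral_exp]
    split_ifs with hd
    · rw [show (i : ℤ) - j = x.1 - x.2 by linarith, bsgσ_apply]
      push_cast; ring
    · simp
  have h1 : 0 ≤ ∫ θ in (0 : ℝ)..(2 * Real.pi), (F θ).re :=
    intervalIntegral.integral_nonneg (by positivity) fun θ _ => hFpos θ
  have h2 : ∫ θ in (0 : ℝ)..(2 * Real.pi), (F θ).re =
      (∫ θ in (0 : ℝ)..(2 * Real.pi), F θ).re :=
    Complex.reCLM.intervalIntegral_comp_comm (hFc.intervalIntegrable _ _)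
  rw [h2, hFintegral, Complex.re_ofReal_mul] at h1
  exact nonneg_of_mul_nonneg_right h1 (by positivity)

lemma bsgCnt_le (N : ℕ) (d : ℤ) : bsgCnt N d ≤ N := by
  unfold bsgCnt
  calc _ ≤ ∑ i ∈ Finset.range N, 1 := by
        refine Finset.sum_le_sum fun i _ => ?_
        rw [← Finset.card_filter, Finset.card_le_one]
        intro p hp q hq
        simp at hp hq
        omega
    _ = N := by simp

lemma le_bsgCnt (N : ℕ) (d : ℤ) : N ≤ bsgCnt N d + d.natAbs := by
  unfold bsgCnt
  have h1 : (Finset.Ico d.toNat (N - (-d).toNat)).card ≤ ∑ i ∈ Finset.range N,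
      ∑ j ∈ Finset.range N, if d + ((j : ℤ) - i) = 0 then 1 else 0 := by
    rw [Finset.card_eq_sum_ones]
    refine (Finset.sum_le_sum fun i hi => ?_).trans
      (Finset.sum_le_sum_of_subset (f := fun i : ℕ => ∑ j ∈ Finset.range N,
        if d + ((j : ℤ) - i) = 0 then 1 else 0) (s := Finset.Ico d.toNat (N - (-d).toNat)) ?_)
    · rw [← Finset.card_filter, Nat.one_le_iff_ne_zero, Finset.card_ne_zero]
      rw [Finset.mem_Ico] at hi
      refine ⟨((i : ℤ) - d).toNat, ?_⟩
      simp only [Finset.mem_filter, Finset.mem_range]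
      omega
    · intro i hi
      simp only [Finset.mem_Ico, Finset.mem_range] at *
      omega
  rw [Nat.card_Ico] at h1
  omega

lemma bsgCnt_tendsto (d : ℤ) :
    Filter.Tendsto (fun N : ℕ => (bsgCnt N d : ℝ) / N) Filter.atTop (nhds 1) := by
  have h1 : Filter.Tendsto (fun N : ℕ => 1 - (d.natAbs : ℝ) / N) Filter.atTop (nhds 1) := by
    simpa using (tendsto_const_div_atTop_nhds_zero_nat (d.natAbs : ℝ)).const_sub 1
  refine tendsto_of_tendsto_of_tendsto_of_le_of_le' h1 tendsto_const_nhds ?_ ?_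
  · filter_upwards [Filter.eventually_gt_atTop 0] with N hN
    have hN' : (0 : ℝ) < N := by exact_mod_cast hN
    have : (N : ℝ) ≤ bsgCnt N d + d.natAbs := by exact_mod_cast le_bsgCnt N d
    rw [← div_self hN'.ne', ← sub_div]
    gcongr; linarith
  · filter_upwards [Filter.eventually_gt_atTop 0] with N hN
    have hN' : (0 : ℝ) < N := by exact_mod_cast hN
    rw [div_le_one hN']
    exact_mod_cast bsgCnt_le N d

lemma bsg_pos {s : ℤ × ℤ → ℂ} (h : BsgPSD s)
    (a : ℤ × ℤ →₀ ℂ) (ha : ∀ z, z ≠ 0 → 0 ≤ (bsgP a z).re) :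
    0 ≤ (Finsupp.linearCombination ℂ s a).re := by
  have ht : Filter.Tendsto (fun N : ℕ => ∑ x ∈ a.support,
      (a x * s x).re * ((bsgCnt N (x.1 - x.2) : ℝ) / N)) Filter.atTop
      (nhds (∑ x ∈ a.support, (a x * s x).re * 1)) :=
    tendsto_finsetSum _ fun x _ => (bsgCnt_tendsto _).const_mul _
  rw [Finsupp.linearCombination_apply, Finsupp.sum, Complex.re_sum]
  simp only [mul_one] at ht
  simp only [smul_eq_mul]
  refine ge_of_tendsto ht (Filter.Eventually.of_forall fun N => ?_)
  have h1 := div_nonneg (bsg_averaged h N a ha) (Nat.cast_nonneg (α := ℝ) N)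
  refine h1.trans_eq ?_
  rw [Complex.re_sum, Finset.sum_div]
  refine Finset.sum_congr rfl fun x _ => ?_
  rw [mul_comm _ (bsgCnt N _ : ℂ), ← Complex.ofReal_natCast, Complex.re_ofReal_mul]
  ring

/-- The punctured plane. -/
abbrev BsgX : Type := {z : ℂ // z ≠ 0}

instance bsgX_locallyCompact : LocallyCompactSpace BsgX :=
  IsOpen.locallyCompactSpace (s := {z : ℂ | z ≠ 0}) isOpen_ne

open CompactlySupported

lemma bsgP_continuous (a : ℤ × ℤ →₀ ℂ) : Continuous fun z : BsgX => (bsgP a z).re := by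
  unfold bsgP
  simp only [Finsupp.linearCombination_apply, Finsupp.sum, smul_eq_mul]
  refine Complex.continuous_re.comp (continuous_finsetSum _ fun x _ => continuous_const.mul
    (Continuous.mul ?_ ?_))
  · exact continuous_subtype_val.zpow₀ _ fun z => Or.inl z.2
  · refine Continuous.zpow₀ (Complex.continuous_conj.comp continuous_subtype_val) _
      fun z => Or.inl ?_
    simpa using z.2

lemma bsgP_add (a b : ℤ × ℤ →₀ ℂ) (z : ℂ) : bsgP (a + b) z = bsgP a z + bsgP b z := by
  simp [bsgP]

lemma bsgP_rsmul (c : ℝ) (a : ℤ × ℤ →₀ ℂ) (z : ℂ) : bsgP (c • a) z = c * bsgP a z := by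
  have : c • a = (c : ℂ) • a := by ext x; simp
  rw [this]; simp [bsgP]

lemma bsgP_single (x : ℤ × ℤ) (c : ℂ) (z : ℂ) :
    bsgP (Finsupp.single x c) z = c * (z ^ x.1 * (starRingEnd ℂ z) ^ x.2) := by
  simp [bsgP]

/-- The cone of pairs `(p, f)` with `Re p + f ≥ 0` on the punctured plane. -/
noncomputable def bsgCone : PointedCone ℝ ((ℤ × ℤ →₀ ℂ) × C_c(BsgX, ℝ)) where
  carrier := {w | ∀ z : BsgX, 0 ≤ (bsgP w.1 z).re + w.2 z}
  zero_mem' := by intro z; simp [bsgP]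
  add_mem' := by
    intro v w hv hw z
    have h1 := hv z
    have h2 := hw z
    simp only [Prod.fst_add, Prod.snd_add, bsgP_add, Complex.add_re,
      CompactlySupportedContinuousMap.coe_add, Pi.add_apply]
    linarith
  smul_mem' := by
    intro c w hw z
    have h1 := mul_nonneg c.2 (hw z)
    have h2 : c • w = (c : ℝ) • w := rfl
    rw [h2]
    simp only [Prod.smul_fst, Prod.smul_snd, bsgP_rsmul, Complex.re_ofReal_mul,
      CompactlySupportedContinuousMap.coe_smul, Pi.smul_apply, smul_eq_mul]
    linarith

lemma bsg_functional {s : ℤ × ℤ → ℂ} (h : BsgPSD s) :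
    ∃ g : ((ℤ × ℤ →₀ ℂ) × C_c(BsgX, ℝ)) →ₗ[ℝ] ℝ,
      (∀ a, g (a, 0) = (Finsupp.linearCombination ℂ s a).re) ∧ ∀ w ∈ bsgCone, 0 ≤ g w := by
  let Lr : ((ℤ × ℤ →₀ ℂ) × C_c(BsgX, ℝ)) →ₗ[ℝ] ℝ :=
    (Complex.reLm.comp ((Finsupp.linearCombination ℂ s).restrictScalars ℝ)).comp
      (LinearMap.fst ℝ _ _)
  have hnn : ∀ x : (Lr.toPMap (LinearMap.range
      (LinearMap.inl ℝ (ℤ × ℤ →₀ ℂ) C_c(BsgX, ℝ)))).domain,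
      (x : (ℤ × ℤ →₀ ℂ) × C_c(BsgX, ℝ)) ∈ bsgCone → 0 ≤ (Lr.toPMap (LinearMap.range
      (LinearMap.inl ℝ (ℤ × ℤ →₀ ℂ) C_c(BsgX, ℝ)))) x := by
    rintro ⟨_, a, rfl⟩ ha
    refine bsg_pos h a fun z hz => ?_
    have := ha ⟨z, hz⟩
    simpa using this
  have hdense : ∀ y, ∃ x : (Lr.toPMap (LinearMap.range
      (LinearMap.inl ℝ (ℤ × ℤ →₀ ℂ) C_c(BsgX, ℝ)))).domain,
      (x : (ℤ × ℤ →₀ ℂ) × C_c(BsgX, ℝ)) + y ∈ bsgCone := by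
    rintro ⟨a, f⟩
    obtain ⟨C, hC⟩ : ∃ C : ℝ, ∀ z, ‖f z‖ ≤ C :=
      f.hasCompactSupport.exists_bound_of_continuous f.continuous
    refine ⟨⟨(-a + Finsupp.single 0 (C : ℂ), 0), ⟨_, rfl⟩⟩, fun z => ?_⟩
    have h1 := abs_le.1 (hC z)
    have h2 : -a + Finsupp.single 0 (C : ℂ) + a = Finsupp.single 0 (C : ℂ) := by abel
    simp [h2, bsgP_single]
    linarith [h1.1]
  obtain ⟨g, hg1, hg2⟩ := riesz_extension bsgCone _ hnn hdense
  exact ⟨g, fun a => hg1 ⟨(a, 0), ⟨a, rfl⟩⟩, hg2⟩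

lemma bsg_compact (n : ℕ) :
    IsCompact {z : BsgX | ((n : ℝ) + 1)⁻¹ ≤ ‖(z : ℂ)‖ ∧ ‖(z : ℂ)‖ ≤ n + 1} := by
  have hK : IsCompact {z : ℂ | ((n : ℝ) + 1)⁻¹ ≤ ‖z‖ ∧ ‖z‖ ≤ n + 1} := by
    refine (isCompact_closedBall (0 : ℂ) (n + 1)).of_isClosed_subset ?_ ?_
    · exact (isClosed_le continuous_const continuous_norm).inter
        (isClosed_le continuous_norm continuous_const)
    · intro z hz; simpa using hz.2
  refine (Topology.IsInducing.subtypeVal.isCompact_preimage_iff ?_).2 hK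
  intro z hz
  refine ⟨⟨z, ?_⟩, rfl⟩
  rintro rfl
  have h1 := hz.1
  have : (0 : ℝ) < ((n : ℝ) + 1)⁻¹ := by positivity
  simp at h1
  linarith

/-- Multiplication by `|z|^2 + |z|^(-2)`. -/
noncomputable def bsgQ (a : ℤ × ℤ →₀ ℂ) : ℤ × ℤ →₀ ℂ :=
  a.mapDomain (fun x => x + (1, 1)) + a.mapDomain (fun x => x + (-1, -1))

lemma bsgP_bsgQ (a : ℤ × ℤ →₀ ℂ) (z : ℂ) (hz : z ≠ 0) :
    (bsgP (bsgQ a) z).re = (‖z‖ ^ 2 + (‖z‖ ^ 2)⁻¹) * (bsgP a z).re := by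
  rw [← Complex.re_ofReal_mul]
  congr 1
  have hz' : starRingEnd ℂ z ≠ 0 := by simpa using hz
  rw [bsgQ, bsgP_add]
  unfold bsgP
  rw [Finsupp.linearCombination_mapDomain, Finsupp.linearCombination_mapDomain]
  simp only [Finsupp.linearCombination_apply, Finsupp.sum, smul_eq_mul]
  push_cast
  rw [← Complex.conj_mul', ← Finset.sum_add_distrib, Finset.mul_sum]
  refine Finset.sum_congr rfl fun x _ => ?_
  simp only [Function.comp, Prod.fst_add, Prod.snd_add, zpow_add₀ hz, zpow_add₀ hz', zpow_one,
    zpow_neg_one]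
  field_simp

open MeasureTheory in
lemma bsg_measure {s : ℤ × ℤ → ℂ} (h : BsgPSD s) :
    ∃ μ : Measure BsgX, ∀ a : ℤ × ℤ →₀ ℂ, (∀ z : BsgX, 0 ≤ (bsgP a z).re) →
      Integrable (fun z : BsgX => (bsgP a z).re) μ ∧
      ∫ z : BsgX, (bsgP a z).re ∂μ = (Finsupp.linearCombination ℂ s a).re := by
  obtain ⟨g, hg1, hg2⟩ := bsg_functional h
  let Λ : C_c(BsgX, ℝ) →ₚ[ℝ] ℝ := PositiveLinearMap.mk₀ (g.comp (LinearMap.inr ℝ _ _)) (by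
    intro f hf
    refine hg2 _ fun z => ?_
    have := hf z
    simpa [bsgP] using this)
  have hΛ : ∀ f, Λ f = g (0, f) := fun f => rfl
  refine ⟨RealRMK.rieszMeasure Λ, fun a ha => ?_⟩
  set μ := RealRMK.rieszMeasure Λ
  have hU : ∀ n : ℕ, ∃ f : C(BsgX, ℝ),
      Set.EqOn f 1 {z : BsgX | ((n : ℝ) + 1)⁻¹ ≤ ‖(z : ℂ)‖ ∧ ‖(z : ℂ)‖ ≤ n + 1} ∧
      HasCompactSupport f ∧ ∀ x, f x ∈ Set.Icc (0 : ℝ) 1 := by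
    intro n
    obtain ⟨f, h1, -, h2, h3⟩ := exists_continuous_one_zero_of_isCompact (bsg_compact n)
      isClosed_empty (Set.disjoint_empty _)
    exact ⟨f, h1, h2, h3⟩
  choose f hf1 hfc hf01 using hU
  set p : BsgX → ℝ := fun z => (bsgP a z).re with hp
  have hpc : Continuous p := bsgP_continuous a
  let F : ℕ → C_c(BsgX, ℝ) := fun n => ⟨⟨fun z => p z * f n z, hpc.mul (f n).continuous⟩,
    (hfc n).mul_left⟩
  have hF : ∀ n z, F n z = p z * f n z := fun n z => rfl
  have hFint : ∀ n, ∫ z, p z * f n z ∂μ = g (0, F n) := fun n =>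
    RealRMK.integral_rieszMeasure Λ (F n)
  have hFi : ∀ n, Integrable (fun z => p z * f n z) μ := fun n =>
    (F n).continuous.integrable_of_hasCompactSupport (F n).hasCompactSupport
  have hFnn : ∀ n z, 0 ≤ p z * f n z := fun n z => mul_nonneg (ha z) (hf01 n z).1
  set L := (Finsupp.linearCombination ℂ s a).re with hL
  set L2 := (Finsupp.linearCombination ℂ s (bsgQ a)).re with hL2
  have hup : ∀ n, ∫ z, p z * f n z ∂μ ≤ L := by
    intro n
    rw [hFint, hL, ← hg1, ← sub_nonneg, ← map_sub]
    refine hg2 _ fun z => ?_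
    simp [hF]
    have := mul_le_mul_of_nonneg_left (hf01 n z).2 (ha z)
    simp only [hp]
    linarith
  have hlow : ∀ n : ℕ, L - ((n : ℝ) + 1)⁻¹ * L2 ≤ ∫ z, p z * f n z ∂μ := by
    intro n
    have hn : (0 : ℝ) < (n : ℝ) + 1 := by positivity
    have hn1 : (1 : ℝ) ≤ (n : ℝ) + 1 := by simp
    have h1 : 0 ≤ g (((n : ℝ) + 1)⁻¹ • bsgQ a + (-1 : ℝ) • a, F n) := by
      refine hg2 _ fun z => ?_
      simp only [bsgP_add, bsgP_rsmul, Complex.add_re, Complex.re_ofReal_mul,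
        bsgP_bsgQ a z z.2, hF]
      change 0 ≤ _ * (_ * p z) + -1 * p z + _
      by_cases hz : ((n : ℝ) + 1)⁻¹ ≤ ‖(z : ℂ)‖ ∧ ‖(z : ℂ)‖ ≤ n + 1
      · rw [hf1 n hz]
        have := ha z
        have h3 : 0 ≤ p z := ha z
        have : 0 ≤ ((n : ℝ) + 1)⁻¹ * ((‖(z : ℂ)‖ ^ 2 + (‖(z : ℂ)‖ ^ 2)⁻¹) * p z) := by positivity
        simpa using this
      · have hq : ((n : ℝ) + 1) ≤ ‖(z : ℂ)‖ ^ 2 + (‖(z : ℂ)‖ ^ 2)⁻¹ := by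
          have hz0 : 0 < ‖(z : ℂ)‖ := norm_pos_iff.2 z.2
          have hzi : 0 < (‖(z : ℂ)‖ ^ 2)⁻¹ := by positivity
          rw [not_and_or, not_le, not_le] at hz
          rcases hz with hz | hz
          · have h4 : (n : ℝ) + 1 ≤ ‖(z : ℂ)‖⁻¹ := by
              rw [le_inv_comm₀ hn hz0]; exact hz.le
            have : (‖(z : ℂ)‖ ^ 2)⁻¹ = (‖(z : ℂ)‖⁻¹) ^ 2 := by rw [inv_pow]
            rw [this]
            nlinarith [sq_nonneg ‖(z : ℂ)‖]
          · nlinarith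
        have h3 : 0 ≤ p z := ha z
        have h4 : p z ≤ ((n : ℝ) + 1)⁻¹ * ((‖(z : ℂ)‖ ^ 2 + (‖(z : ℂ)‖ ^ 2)⁻¹) * p z) := by
          rw [← mul_assoc]
          refine le_mul_of_one_le_left h3 ?_
          rw [inv_mul_eq_div, one_le_div hn]; exact hq
        linarith [hFnn n z]
    have h2 : (((n : ℝ) + 1)⁻¹ • bsgQ a + (-1 : ℝ) • a, F n) =
      ((n : ℝ) + 1)⁻¹ • ((bsgQ a, 0) : (ℤ × ℤ →₀ ℂ) × C_c(BsgX, ℝ)) + (-1 : ℝ) • (a, 0)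
        + (0, F n) := by
      ext <;> simp
    rw [h2, map_add, map_add, map_smul, map_smul, hg1, hg1, ← hFint] at h1
    simp only [smul_eq_mul] at h1
    linarith
  have htend : Filter.Tendsto (fun n => ∫ z, p z * f n z ∂μ) Filter.atTop (nhds L) := by
    refine tendsto_of_tendsto_of_tendsto_of_le_of_le ?_ tendsto_const_nhds hlow hup
    have h1 : Filter.Tendsto (fun n : ℕ => ((n : ℝ) + 1)⁻¹) Filter.atTop (nhds 0) := by
      simpa using tendsto_one_div_add_atTop_nhds_zero_nat (𝕜 := ℝ)
    simpa using (h1.mul_const L2).const_sub L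
  have hev : ∀ z : BsgX, ∀ᶠ n in Filter.atTop, p z * f n z = p z := by
    intro z
    have hz0 : 0 < ‖(z : ℂ)‖ := norm_pos_iff.2 z.2
    obtain ⟨n1, hn1⟩ := exists_nat_ge ‖(z : ℂ)‖
    obtain ⟨n2, hn2⟩ := exists_nat_ge ‖(z : ℂ)‖⁻¹
    filter_upwards [Filter.eventually_ge_atTop n1, Filter.eventually_ge_atTop n2] with n h1 h2
    have h1' : (n1 : ℝ) ≤ n := by exact_mod_cast h1
    have h2' : (n2 : ℝ) ≤ n := by exact_mod_cast h2
    rw [hf1 n ⟨?_, by linarith⟩]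
    · simp
    · rw [inv_le_comm₀ (by positivity) hz0]; linarith
  have hlint : ∫⁻ z, ENNReal.ofReal (p z) ∂μ ≤ ENNReal.ofReal L := by
    calc ∫⁻ z, ENNReal.ofReal (p z) ∂μ
        = ∫⁻ z, Filter.liminf (fun n => ENNReal.ofReal (p z * f n z)) Filter.atTop ∂μ := by
          refine lintegral_congr fun z => ?_
          refine (Filter.Tendsto.liminf_eq ?_).symm
          refine tendsto_const_nhds.congr' ?_
          filter_upwards [hev z] with n hn
          rw [hn]
      _ ≤ Filter.liminf (fun n => ∫⁻ z, ENNReal.ofReal (p z * f n z) ∂μ) Filter.atTop := by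
          refine lintegral_liminf_le fun n => ?_
          exact (hpc.mul (f n).continuous).measurable.ennreal_ofReal
      _ ≤ ENNReal.ofReal L := by
          refine Filter.liminf_le_of_le (by isBoundedDefault) fun b hb => ?_
          obtain ⟨n, hn⟩ := hb.exists
          refine hn.trans ?_
          rw [← ofReal_integral_eq_lintegral_ofReal (hFi n)
            (Filter.Eventually.of_forall (hFnn n))]
          exact ENNReal.ofReal_le_ofReal (hup n)
  have hpi : Integrable p μ := by
    refine ⟨hpc.aestronglyMeasurable, ?_⟩
    rw [hasFiniteIntegral_iff_ofReal (Filter.Eventually.of_forall ha)]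
    exact hlint.trans_lt ENNReal.ofReal_lt_top
  refine ⟨hpi, ?_⟩
  have hdom : Filter.Tendsto (fun n => ∫ z, p z * f n z ∂μ) Filter.atTop
      (nhds (∫ z, p z ∂μ)) := by
    refine tendsto_integral_of_dominated_convergence p
      (fun n => (hFi n).aestronglyMeasurable) hpi ?_ ?_
    · intro n
      refine Filter.Eventually.of_forall fun z => ?_
      rw [Real.norm_of_nonneg (hFnn n z)]
      exact mul_le_of_le_one_right (ha z) (hf01 n z).2
    · refine Filter.Eventually.of_forall fun z => ?_
      exact tendsto_const_nhds.congr' ((hev z).mono fun n hn => hn.symm)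
  exact tendsto_nhds_unique hdom htend

open MeasureTheory in
lemma bsg_moments {s : ℤ × ℤ → ℂ} (h : BsgPSD s) :
    ∃ μ : Measure BsgX, ∀ x : ℤ × ℤ,
      Integrable (fun z : BsgX => (z : ℂ) ^ x.1 * (starRingEnd ℂ (z : ℂ)) ^ x.2) μ ∧
      s x = ∫ z : BsgX, (z : ℂ) ^ x.1 * (starRingEnd ℂ (z : ℂ)) ^ x.2 ∂μ := by
  obtain ⟨μ, hμ⟩ := bsg_measure h
  refine ⟨μ, fun x => ?_⟩
  set m : BsgX → ℂ := fun z => (z : ℂ) ^ x.1 * (starRingEnd ℂ (z : ℂ)) ^ x.2 with hm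
  have hmc : Continuous m := by
    refine Continuous.mul (continuous_subtype_val.zpow₀ _ fun z => Or.inl z.2) ?_
    refine Continuous.zpow₀ (Complex.continuous_conj.comp continuous_subtype_val) _
      fun z => Or.inl ?_
    simpa using z.2
  set d : ℤ × ℤ →₀ ℂ := Finsupp.single 0 1 + Finsupp.single (x.1 + x.2, x.1 + x.2) 1 with hd
  have hdv : ∀ z : BsgX, (bsgP d z).re = 1 + (‖(z : ℂ)‖ ^ (x.1 + x.2)) ^ 2 := by
    intro z
    rw [hd, bsgP_add, bsgP_single, bsgP_single]
    simp only [Prod.fst_zero, Prod.snd_zero, zpow_zero, one_mul, mul_one, Complex.add_re,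
      Complex.one_re]
    rw [← mul_zpow, Complex.mul_conj', ← Complex.ofReal_pow, ← Complex.ofReal_zpow,
      Complex.ofReal_re]
    congr 1
    rw [← zpow_natCast, ← zpow_natCast, zpow_comm]
  have hmn : ∀ z : BsgX, ‖m z‖ ≤ (bsgP d z).re := by
    intro z
    have hz0 : ‖(z : ℂ)‖ ≠ 0 := norm_ne_zero_iff.2 z.2
    rw [hdv, hm]
    simp only [norm_mul, norm_zpow, RCLike.norm_conj]
    rw [← zpow_add₀ hz0]
    nlinarith [sq_nonneg (‖(z : ℂ)‖ ^ (x.1 + x.2) - 1)]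
  have hdpos : ∀ z : BsgX, 0 ≤ (bsgP d z).re := fun z => (norm_nonneg _).trans (hmn z)
  obtain ⟨hdi, hdint⟩ := hμ d hdpos
  have hmi : Integrable m μ := hdi.mono' hmc.aestronglyMeasurable
    (Filter.Eventually.of_forall hmn)
  refine ⟨hmi, ?_⟩
  have key : ∀ c : ℂ, ‖c‖ ≤ 1 → (c * ∫ z, m z ∂μ).re = (c * s x).re := by
    intro c hc
    obtain ⟨h1, h2⟩ := hμ (d + Finsupp.single x c) (by
      intro z
      rw [bsgP_add, bsgP_single, Complex.add_re]
      have h3 := Complex.abs_re_le_norm (c * m z)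
      rw [norm_mul] at h3
      have h4 := mul_le_of_le_one_left (norm_nonneg (m z)) hc
      have h5 := (abs_le.1 h3).1
      have h6 := hmn z
      change 0 ≤ _ + (c * m z).re
      linarith)
    rw [map_add, Complex.add_re, Finsupp.linearCombination_single, smul_eq_mul, ← hdint] at h2
    have h7 : ∫ z, (c * m z).re ∂μ = (c * ∫ z, m z ∂μ).re := by
      rw [← integral_const_mul]
      exact integral_re (𝕜 := ℂ) (hmi.const_mul c)
    have h8 : ∀ z : BsgX, (bsgP (d + Finsupp.single x c) z).re = (bsgP d z).re + (c * m z).re := by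
      intro z; rw [bsgP_add, bsgP_single, Complex.add_re]
    simp only [h8] at h2
    have hci : Integrable (fun z => (c * m z).re) μ := (hmi.const_mul c).re
    rw [integral_add hdi hci, h7] at h2
    linarith
  have k1 := key 1 (by simp)
  have k2 := key Complex.I (by simp)
  simp at k1 k2
  exact Complex.ext k1.symm k2.symm

open MeasureTheory in
lemma bsg_easy (s : ℤ × ℤ → ℂ) (μ : Measure ℂ)
    (hμ : ∀ mn : ℤ × ℤ,
        MeasureTheory.IntegrableOn
          (fun z : ℂ => z ^ mn.1 * (starRingEnd ℂ z) ^ mn.2) ({0}ᶜ : Set ℂ) μ ∧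
        s mn = ∫ z in ({0}ᶜ : Set ℂ), z ^ mn.1 * (starRingEnd ℂ z) ^ mn.2 ∂μ) : BsgPSD s := by
  intro r ξ c
  have key : (∑ i : Fin r, ∑ j : Fin r,
          c i * starRingEnd ℂ (c j) * s ((ξ i).swap + ξ j)) =
      ((∫ z in ({0}ᶜ : Set ℂ), Complex.normSq (∑ j : Fin r, starRingEnd ℂ (c j) *
        (z ^ (ξ j).1 * (starRingEnd ℂ z) ^ (ξ j).2)) ∂μ : ℝ) : ℂ) := by
    rw [← integral_complex_ofReal]
    have h1 : ∀ i j : Fin r, c i * starRingEnd ℂ (c j) * s ((ξ i).swap + ξ j) =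
        ∫ z in ({0}ᶜ : Set ℂ), c i * starRingEnd ℂ (c j) *
          (z ^ ((ξ i).swap + ξ j).1 * (starRingEnd ℂ z) ^ ((ξ i).swap + ξ j).2) ∂μ := by
      intro i j
      rw [integral_const_mul, ← (hμ _).2]
    simp only [h1]
    have h2 : ∀ i : Fin r, ∑ j : Fin r, ∫ z in ({0}ᶜ : Set ℂ), c i * starRingEnd ℂ (c j) *
          (z ^ ((ξ i).swap + ξ j).1 * (starRingEnd ℂ z) ^ ((ξ i).swap + ξ j).2) ∂μ =
        ∫ z in ({0}ᶜ : Set ℂ), ∑ j : Fin r, c i * starRingEnd ℂ (c j) *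
          (z ^ ((ξ i).swap + ξ j).1 * (starRingEnd ℂ z) ^ ((ξ i).swap + ξ j).2) ∂μ := by
      intro i
      exact (integral_finsetSum _ fun j _ => (hμ _).1.const_mul _).symm
    simp only [h2]
    rw [← integral_finsetSum _ fun i _ => integrable_finsetSum _ fun j _ => (hμ _).1.const_mul _]
    refine setIntegral_congr_fun (measurableSet_singleton _).compl fun z hz => ?_
    have hz0 : z ≠ 0 := by simpa using hz
    have hz' : starRingEnd ℂ z ≠ 0 := by simpa using hz0
    rw [Complex.normSq_eq_conj_mul_self, map_sum, Finset.sum_mul_sum]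
    refine Finset.sum_congr rfl fun i _ => Finset.sum_congr rfl fun j _ => ?_
    simp only [map_mul, map_zpow₀, Complex.conj_conj, Prod.fst_add, Prod.snd_add, Prod.fst_swap,
      Prod.snd_swap, zpow_add₀ hz0, zpow_add₀ hz']
    ring
  rw [key]
  refine ⟨Complex.ofReal_im _, ?_⟩
  rw [Complex.ofReal_re]
  exact integral_nonneg fun z => Complex.normSq_nonneg _

/-- **Bisgaard's theorem on the two-sided complex moment problem.**
A sequence `s : ℤ × ℤ → ℂ` is positive semidefinite on the `*`-semigroup `ℤ²`
(with involution `(m,n)* = (n,m)`) if and only if there is a positive Borel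
measure `μ` on `ℂ` with `μ({0}) = 0` such that
`s(m,n) = ∫_{ℂ∖{0}} z^m conj(z)^n dμ` for all `(m,n) ∈ ℤ²`. -/
theorem bisgaard_two_sided_complex_moment_problem (s : ℤ × ℤ → ℂ) :
    (∀ (r : ℕ) (ξ : Fin r → ℤ × ℤ) (c : Fin r → ℂ),
      (∑ i : Fin r, ∑ j : Fin r,
          c i * starRingEnd ℂ (c j) * s ((ξ i).swap + ξ j)).im = 0 ∧
      0 ≤ (∑ i : Fin r, ∑ j : Fin r,
          c i * starRingEnd ℂ (c j) * s ((ξ i).swap + ξ j)).re) ↔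
    ∃ μ : MeasureTheory.Measure ℂ, μ {0} = 0 ∧
      ∀ mn : ℤ × ℤ,
        MeasureTheory.IntegrableOn
          (fun z : ℂ => z ^ mn.1 * (starRingEnd ℂ z) ^ mn.2) ({0}ᶜ : Set ℂ) μ ∧
        s mn = ∫ z in ({0}ᶜ : Set ℂ), z ^ mn.1 * (starRingEnd ℂ z) ^ mn.2 ∂μ := by

  constructor
  · intro h
    obtain ⟨μ, hμ⟩ := bsg_moments (s := s) h
    have hemb : MeasurableEmbedding (Subtype.val : BsgX → ℂ) :=
      MeasurableEmbedding.subtype_coe (measurableSet_singleton (0 : ℂ)).compl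
    have h0 : (μ.map (Subtype.val : BsgX → ℂ)) {0} = 0 := by
      rw [hemb.map_apply]
      have : (Subtype.val : BsgX → ℂ) ⁻¹' {0} = ∅ := by
        ext z; simp [z.2]
      rw [this]; simp
    have hr : (μ.map (Subtype.val : BsgX → ℂ)).restrict ({0}ᶜ : Set ℂ) =
        μ.map (Subtype.val : BsgX → ℂ) :=
      MeasureTheory.Measure.restrict_eq_self_of_ae_mem
        (MeasureTheory.compl_mem_ae_iff.2 h0)
    refine ⟨μ.map Subtype.val, h0, fun mn => ?_⟩
    unfold MeasureTheory.IntegrableOn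
    rw [hr, hemb.integrable_map_iff, hemb.integral_map]
    exact hμ mn
  · rintro ⟨μ, -, hμ⟩
    exact bsg_easy s μ hμ
end

section
/- Let ℰ be a multiplicative set in the one-variable polynomial ring ℝ[y] and B := ℰ⁻¹ℝ[y]. Then for every linear functional L on B with L(b²) ≥ 0 for all b ∈ B there exists a positive Borel measure μ on ℝ such that μ({y ∈ ℝ : q(y) = 0}) = 0 for every q ∈ ℰ and, for every p ∈ ℝ[y] and q ∈ ℰ, the function y ↦ p(y)/q(y) is μ-integrable and L(p/q) = ∫_ℝ p(y)/q(y) dμ(y). -/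
open Polynomial MeasureTheory Filter Topology
open scoped CompactlySupported NNReal ENNReal

lemma RM.nonneg_of_off_zeros (p q : ℝ[X]) (hq : q ≠ 0)
    (h : ∀ y, q.eval y ≠ 0 → 0 ≤ p.eval y) : ∀ y, 0 ≤ p.eval y := by
  have hfin : {y : ℝ | q.eval y = 0}.Finite := by
    refine (q.roots.toFinset.finite_toSet).subset ?_
    intro y hy
    simpa [hq] using hy
  have hd : Dense ({y : ℝ | q.eval y = 0}ᶜ) := hfin.countable.dense_compl ℝ
  have hc : IsClosed {y : ℝ | 0 ≤ p.eval y} := isClosed_le continuous_const p.continuous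
  have := hc.closure_subset_iff.2 (fun y hy => h y hy : ({y : ℝ | q.eval y = 0}ᶜ) ⊆ _)
  intro y
  exact this (hd y)

lemma RM.sos (n : ℕ) : ∀ p : ℝ[X], p.natDegree ≤ n → (∀ y, 0 ≤ p.eval y) → IsSumSq p := by
  induction n using Nat.strong_induction_on with
  | _ n ih =>
  intro p hn hp
  obtain ⟨x, hx⟩ := p.exists_forall_norm_le
  have hx' : ∀ y, p.eval x ≤ p.eval y := by
    intro y
    simpa [Real.norm_eq_abs, abs_of_nonneg (hp _)] using hx y
  have hC : IsSumSq (C (p.eval x)) := by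
    have : C (p.eval x) = C (√(p.eval x)) * C (√(p.eval x)) := by
      rw [← C_mul, Real.mul_self_sqrt (hp x)]
    rw [this]; exact IsSumSq.mul_self _
  obtain ⟨s, hs⟩ : (X - C x) ∣ p - C (p.eval x) := by
    rw [dvd_iff_isRoot]; simp
  have hder : p.derivative.eval x = 0 := by
    have h1 : IsLocalMin (fun y => p.eval y) x := Eventually.of_forall hx'
    have := h1.deriv_eq_zero
    simpa using this
  have hsx : s.eval x = 0 := by
    have := congrArg (fun r => (derivative r).eval x) hs
    simp [hder] at this
    linarith
  obtain ⟨t, ht⟩ : (X - C x) ∣ s := by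
    rw [dvd_iff_isRoot]; exact hsx
  have hp2 : p = C (p.eval x) + (X - C x) * (X - C x) * t := by
    rw [mul_assoc, ← ht, ← hs]; ring
  by_cases ht0 : t = 0
  · rw [hp2, ht0]; simpa using hC
  have htn : ∀ y, 0 ≤ t.eval y := by
    apply RM.nonneg_of_off_zeros t (X - C x) (X_sub_C_ne_zero x)
    intro y hy
    have h1 := hx' y
    have h2 := congrArg (fun r => r.eval y) hp2
    simp at h2 hy
    have h3 : 0 ≤ ((y - x) * (y - x)) * t.eval y := by linarith
    have h4 : 0 < (y - x) * (y - x) := mul_self_pos.2 hy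
    exact nonneg_of_mul_nonneg_right h3 h4
  have hdeg : t.natDegree < n := by
    have h1 : (p - C (p.eval x)).natDegree = p.natDegree := natDegree_sub_C
    have h2 : p - C (p.eval x) = (X - C x) * ((X - C x) * t) := by rw [hs, ht]
    rw [h2, natDegree_mul (X_sub_C_ne_zero x) (mul_ne_zero (X_sub_C_ne_zero x) ht0),
      natDegree_mul (X_sub_C_ne_zero x) ht0, natDegree_X_sub_C] at h1
    omega
  rw [hp2]
  exact hC.add ((IsSumSq.mul_self _).mul (ih _ hdeg t le_rfl htn))

lemma RM.L_nonneg (ℰ : Submonoid ℝ[X]) (hℰ : (0 : ℝ[X]) ∉ ℰ)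
    (L : Localization ℰ →ₗ[ℝ] ℝ) (hL : ∀ b : Localization ℰ, 0 ≤ L (b ^ 2))
    (p : ℝ[X]) (q : ℰ) (h : ∀ y, (q : ℝ[X]).eval y ≠ 0 → 0 ≤ p.eval y / (q : ℝ[X]).eval y) :
    0 ≤ L (Localization.mk p q) := by
  have hq : (q : ℝ[X]) ≠ 0 := fun h0 => hℰ (h0 ▸ q.2)
  have h1 : ∀ y, 0 ≤ (p * q).eval y := by
    apply RM.nonneg_of_off_zeros _ q hq
    intro y hy
    have h2 := h y hy
    have : (p * (q : ℝ[X])).eval y = p.eval y / (q : ℝ[X]).eval y * ((q : ℝ[X]).eval y)^2 := by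
      rw [eval_mul]; field_simp
    rw [this]; positivity
  have h2 : IsSumSq (p * q) := RM.sos _ _ le_rfl h1
  have h3 : ∀ r : ℝ[X], IsSumSq r → 0 ≤ L (Localization.mk r (q * q)) := by
    intro r hr
    induction hr with
    | zero => simp [Localization.mk_zero]
    | sq_add a hs ih =>
      rw [← Localization.add_mk_self, map_add, ← Localization.mk_mul, ← pow_two]
      exact add_nonneg (hL _) ih
  have h4 : Localization.mk p q = Localization.mk (p * q) (q * q) := by
    rw [← Localization.mk_mul, Localization.mk_self_mk]; simp
  rw [h4]; exact h3 _ h2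

/-- The cone of pairs `(b, f)` with `b + f ≥ 0` off the poles of `b`. -/
def RM.cone (ℰ : Submonoid ℝ[X]) : PointedCone ℝ (Localization ℰ × C_c(ℝ, ℝ)) where
  carrier := {x | ∃ (p : ℝ[X]) (q : ℰ), x.1 = Localization.mk p q ∧
    ∀ y, (q : ℝ[X]).eval y ≠ 0 → 0 ≤ p.eval y / (q : ℝ[X]).eval y + x.2 y}
  add_mem' := by
    rintro ⟨a, f⟩ ⟨b, g⟩ ⟨p, q, h, hp⟩ ⟨p', q', h', hp'⟩
    simp only at h h' hp hp'
    refine ⟨(q : ℝ[X]) * p' + q' * p, q * q', ?_, ?_⟩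
    · simp [h, h', Localization.add_mk]
    · intro y hy
      simp only [Submonoid.coe_mul, eval_mul, ne_eq, mul_eq_zero, not_or] at hy
      have h1 := hp y hy.1
      have h2 := hp' y hy.2
      obtain ⟨e1, e2⟩ := hy
      have : ((q : ℝ[X]) * p' + q' * p).eval y / ((q * q' : ℰ) : ℝ[X]).eval y
        = p.eval y / (q : ℝ[X]).eval y + p'.eval y / (q' : ℝ[X]).eval y := by
        simp only [Submonoid.coe_mul, eval_mul, eval_add]
        field_simp
        ring
      rw [this]
      simp only [Prod.mk_add_mk, CompactlySupportedContinuousMap.coe_add, Pi.add_apply]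
      linarith
  zero_mem' := ⟨0, 1, by simp [Localization.mk_zero], by simp⟩
  smul_mem' := by
    rintro c ⟨a, f⟩ ⟨p, q, h, hp⟩
    simp only at h hp
    refine ⟨(c : ℝ) • p, q, ?_, ?_⟩
    · rw [← Localization.smul_mk, ← h]; rfl
    · intro y hy
      have h1 := mul_nonneg c.2 (hp y hy)
      have h2 : (c • (a, f) : Localization ℰ × C_c(ℝ, ℝ)).2 y = (c : ℝ) * f y := rfl
      rw [h2, eval_smul, smul_eq_mul]
      refine h1.trans_eq ?_
      show (c : ℝ) * _ = _
      ring

lemma RM.exists_functional (ℰ : Submonoid ℝ[X]) (hℰ : (0 : ℝ[X]) ∉ ℰ)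
    (L : Localization ℰ →ₗ[ℝ] ℝ) (hL : ∀ b : Localization ℰ, 0 ≤ L (b ^ 2)) :
    ∃ Λ : C_c(ℝ, ℝ) →ₚ[ℝ] ℝ, ∀ (f : C_c(ℝ, ℝ)) (p : ℝ[X]) (q : ℰ),
      (∀ y, (q : ℝ[X]).eval y ≠ 0 → f y ≤ p.eval y / (q : ℝ[X]).eval y) →
      Λ f ≤ L (Localization.mk p q) := by
  let F : (Localization ℰ × C_c(ℝ, ℝ)) →ₗ.[ℝ] ℝ :=
    ⟨Submodule.prod ⊤ ⊥, (L ∘ₗ LinearMap.fst ℝ _ _) ∘ₗ Submodule.subtype _⟩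
  have hF : ∀ x : F.domain, F x = L x.1.1 := fun x => rfl
  obtain ⟨g, hg1, hg2⟩ := riesz_extension (RM.cone ℰ) F (by
      rintro ⟨⟨b, f⟩, hx⟩ ⟨p, q, h, hp⟩
      have hf : f = 0 := by simpa using hx.2
      subst hf
      rw [hF]
      simp only at h hp ⊢
      rw [h]
      apply RM.L_nonneg ℰ hℰ L hL
      simpa using hp) (by
      rintro ⟨b, f⟩
      obtain ⟨M, hM⟩ := f.hasCompactSupport.exists_bound_of_continuous f.continuous
      refine ⟨⟨(-b + Localization.mk (C M) 1, 0), by simp [F]⟩, C M, 1, ?_, ?_⟩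
      · simp
      · intro y _
        have := neg_le_of_abs_le (hM y)
        simp
        linarith)
  refine ⟨PositiveLinearMap.mk₀ (g ∘ₗ LinearMap.inr ℝ _ _) ?_, ?_⟩
  · intro f hf
    apply hg2
    refine ⟨0, 1, by simp [Localization.mk_zero], ?_⟩
    intro y _
    have : 0 ≤ f y := hf y
    simpa using this
  · intro f p q h
    have h1 : 0 ≤ g (Localization.mk p q, -f) := by
      apply hg2
      refine ⟨p, q, rfl, ?_⟩
      intro y hy
      have := h y hy
      simp
      linarith
    have h2 : g (Localization.mk p q, 0) = L (Localization.mk p q) :=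
      hg1 ⟨(Localization.mk p q, 0), by simp [F]⟩
    have h3 : ((Localization.mk p q, -f) : Localization ℰ × C_c(ℝ, ℝ))
      = (Localization.mk p q, 0) - (0, f) := by simp
    rw [h3, map_sub, h2] at h1
    show g (0, f) ≤ _
    linarith

/-- The truncations of `a / d`. -/
noncomputable def RM.trunc (a d : ℝ → ℝ) (n : ℕ) (y : ℝ) : ℝ :=
  a y / (d y + a y / (n + 1)) * max 0 (1 - y ^ 2 / (n + 1))

lemma RM.trunc_nonneg (a d : ℝ → ℝ) (ha : ∀ y, 0 < a y) (hd : ∀ y, 0 ≤ d y) (n : ℕ) (y : ℝ) :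
    0 ≤ RM.trunc a d n y := by
  have := ha y
  have := hd y
  unfold RM.trunc
  positivity

lemma RM.trunc_le (a d : ℝ → ℝ) (ha : ∀ y, 0 < a y) (hd : ∀ y, 0 ≤ d y) (n : ℕ) (y : ℝ)
    (hy : d y ≠ 0) : RM.trunc a d n y ≤ a y / d y := by
  have h1 := ha y
  have h2 : 0 < d y := lt_of_le_of_ne (hd y) hy.symm
  unfold RM.trunc
  have h3 : max 0 (1 - y ^ 2 / ((n : ℝ) + 1)) ≤ 1 := by
    apply max_le zero_le_one
    have : 0 ≤ y ^ 2 / ((n : ℝ) + 1) := by positivity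
    linarith
  have h4 : a y / (d y + a y / (n + 1)) ≤ a y / d y := by
    apply div_le_div_of_nonneg_left h1.le h2
    have : 0 ≤ a y / ((n : ℝ) + 1) := by positivity
    linarith
  calc _ ≤ a y / (d y + a y / (n + 1)) * 1 := by
        apply mul_le_mul_of_nonneg_left h3; positivity
    _ ≤ _ := by rw [mul_one]; exact h4

lemma RM.le_trunc (a d : ℝ → ℝ) (ha : ∀ y, 0 < a y) (hd : ∀ y, 0 ≤ d y) (n : ℕ) (y : ℝ)
    (hy : d y ≠ 0) :
    (a y * d y - 1 / (n + 1) * (a y * a y + a y * d y * y ^ 2)) / (d y * d y)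
      ≤ RM.trunc a d n y := by
  have h1 := ha y
  have h2 : 0 < d y := lt_of_le_of_ne (hd y) hy.symm
  unfold RM.trunc
  set e : ℝ := 1 / ((n : ℝ) + 1) with he
  have he0 : 0 < e := by positivity
  have e1 : a y / ((n : ℝ) + 1) = a y * e := by rw [he]; ring
  have e2 : y ^ 2 / ((n : ℝ) + 1) = y ^ 2 * e := by rw [he]; ring
  rw [e1, e2]
  have h3 : a y / (d y + a y * e) * (1 - y ^ 2 * e)
      ≤ a y / (d y + a y * e) * max 0 (1 - y ^ 2 * e) :=
    mul_le_mul_of_nonneg_left (le_max_right _ _) (by positivity)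
  refine le_trans ?_ h3
  have key : a y / (d y + a y * e) * (1 - y ^ 2 * e) -
      (a y * d y - e * (a y * a y + a y * d y * y ^ 2)) / (d y * d y)
      = (a y ^ 3 * e ^ 2 + a y ^ 2 * d y * e ^ 2 * y ^ 2) / (d y ^ 2 * (d y + a y * e)) := by
    have : d y + a y * e ≠ 0 := by positivity
    field_simp
    ring
  have : 0 ≤ (a y ^ 3 * e ^ 2 + a y ^ 2 * d y * e ^ 2 * y ^ 2) / (d y ^ 2 * (d y + a y * e)) := by
    positivity
  linarith

lemma RM.tendsto_e : Tendsto (fun n : ℕ => 1 / ((n : ℝ) + 1)) atTop (𝓝 0) :=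
  tendsto_one_div_add_atTop_nhds_zero_nat

lemma RM.tendsto_cut (y : ℝ) :
    Tendsto (fun n : ℕ => max 0 (1 - y ^ 2 / ((n : ℝ) + 1))) atTop (𝓝 1) := by
  have h : Tendsto (fun n : ℕ => 1 - y ^ 2 * (1 / ((n : ℝ) + 1))) atTop (𝓝 (1 - y ^ 2 * 0)) :=
    tendsto_const_nhds.sub (tendsto_const_nhds.mul RM.tendsto_e)
  have h2 := (tendsto_const_nhds (x := (0 : ℝ))).max h
  simpa [div_eq_mul_inv] using h2

lemma RM.trunc_tendsto (a d : ℝ → ℝ) (y : ℝ) (hy : d y ≠ 0) :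
    Tendsto (fun n => RM.trunc a d n y) atTop (𝓝 (a y / d y)) := by
  have h : Tendsto (fun n : ℕ => d y + a y * (1 / ((n : ℝ) + 1))) atTop (𝓝 (d y + a y * 0)) :=
    tendsto_const_nhds.add (tendsto_const_nhds.mul RM.tendsto_e)
  have h2 := ((tendsto_const_nhds (x := a y)).div h (by simpa using hy)).mul (RM.tendsto_cut y)
  simpa [RM.trunc, div_eq_mul_inv] using h2

lemma RM.trunc_tendsto_top (a d : ℝ → ℝ) (ha : ∀ y, 0 < a y) (y : ℝ) (hy : d y = 0) :
    Tendsto (fun n => RM.trunc a d n y) atTop atTop := by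
  have h : Tendsto (fun n : ℕ => (n : ℝ) + 1) atTop atTop :=
    tendsto_atTop_add_const_right _ _ tendsto_natCast_atTop_atTop
  have h2 := h.atTop_mul_pos one_pos (RM.tendsto_cut y)
  refine h2.congr fun n => ?_
  have := (ha y).ne'
  unfold RM.trunc
  rw [hy, zero_add]
  congr 1
  field_simp

/-- The truncations as compactly supported continuous functions. -/
noncomputable def RM.truncC (a d : ℝ → ℝ) (ha : ∀ y, 0 < a y) (hd : ∀ y, 0 ≤ d y)
    (hac : Continuous a) (hdc : Continuous d) (n : ℕ) : C_c(ℝ, ℝ) where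
  toFun := RM.trunc a d n
  continuous_toFun := by
    unfold RM.trunc
    refine Continuous.mul (hac.div (by fun_prop) ?_) (by fun_prop)
    intro y
    have := ha y
    have := hd y
    positivity
  hasCompactSupport' := by
    apply HasCompactSupport.intro (K := Metric.closedBall 0 ((n : ℝ) + 1))
      (isCompact_closedBall _ _)
    intro y hy
    have h1 : (n : ℝ) + 1 < |y| := by simpa using hy
    have h0 : (0 : ℝ) ≤ n := n.cast_nonneg
    have h2 : 1 ≤ y ^ 2 / ((n : ℝ) + 1) := by
      rw [le_div_iff₀ (by positivity), ← sq_abs]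
      nlinarith
    unfold RM.trunc
    rw [max_eq_left (by linarith), mul_zero]

lemma RM.L_split (ℰ : Submonoid ℝ[X]) (L : Localization ℰ →ₗ[ℝ] ℝ) (a e : ℝ[X]) (d : ℰ) (c : ℝ) :
    L (Localization.mk (a * d - C c * e) (d * d)) =
      L (Localization.mk a d) - c * L (Localization.mk e (d * d)) := by
  have h1 : a * (d : ℝ[X]) - C c * e = a * d + (-c) • e := by
    rw [smul_eq_C_mul, C_neg]; ring
  have h4 : Localization.mk a d = Localization.mk (a * d) (d * d) := by
    rw [← Localization.mk_mul, Localization.mk_self_mk]; simp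
  rw [h1, ← Localization.add_mk_self, ← Localization.smul_mk, map_add, map_smul, ← h4, smul_eq_mul]
  ring

lemma RM.key (ℰ : Submonoid ℝ[X])
    (L : Localization ℰ →ₗ[ℝ] ℝ) (Λ : C_c(ℝ, ℝ) →ₚ[ℝ] ℝ)
    (hΛ : ∀ (f : C_c(ℝ, ℝ)) (p : ℝ[X]) (q : ℰ),
      (∀ y, (q : ℝ[X]).eval y ≠ 0 → f y ≤ p.eval y / (q : ℝ[X]).eval y) →
      Λ f ≤ L (Localization.mk p q)) (a : ℝ[X]) (d : ℰ) (ha : ∀ y, 0 < a.eval y)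
    (hd : ∀ y, 0 ≤ (d : ℝ[X]).eval y) :
    RealRMK.rieszMeasure Λ {y | (d : ℝ[X]).eval y = 0} = 0 ∧
    Integrable (fun y => a.eval y / (d : ℝ[X]).eval y) (RealRMK.rieszMeasure Λ) ∧
    L (Localization.mk a d) = ∫ y, a.eval y / (d : ℝ[X]).eval y ∂(RealRMK.rieszMeasure Λ) := by
  set μ := RealRMK.rieszMeasure Λ with hμ
  let A : ℝ → ℝ := fun y => a.eval y
  let D : ℝ → ℝ := fun y => (d : ℝ[X]).eval y
  let f : ℕ → C_c(ℝ, ℝ) := fun n => RM.truncC A D ha hd a.continuous (d : ℝ[X]).continuous n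
  have hf : ∀ n y, f n y = RM.trunc A D n y := fun n y => rfl
  have hint : ∀ n, ∫ y, f n y ∂μ = Λ (f n) := fun n => RealRMK.integral_rieszMeasure Λ (f n)
  have hub : ∀ n, Λ (f n) ≤ L (Localization.mk a d) := fun n =>
    hΛ _ _ _ fun y hy => RM.trunc_le A D ha hd n y hy
  set e : ℝ := L (Localization.mk (a * a + a * (d : ℝ[X]) * X ^ 2) (d * d)) with he
  have hlb : ∀ n : ℕ, L (Localization.mk a d) - 1 / ((n : ℝ) + 1) * e ≤ Λ (f n) := by
    intro n
    have h1 := hΛ (-f n) (-(a * (d : ℝ[X]) - C (1 / ((n : ℝ) + 1)) * (a * a + a * (d : ℝ[X]) * X ^ 2))) (d * d) (by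
      intro y hy
      have hy' : D y ≠ 0 := by
        intro h0; apply hy; simp only [Submonoid.coe_mul, eval_mul]
        show D y * D y = 0
        rw [h0, zero_mul]
      have h2 := RM.le_trunc A D ha hd n y hy'
      have h3 : (-f n) y = - RM.trunc A D n y := rfl
      rw [h3, eval_neg, neg_div, neg_le_neg_iff]
      simpa [A, D] using h2)
    have h5 : Localization.mk (-(a * (d : ℝ[X]) - C (1 / ((n : ℝ) + 1)) * (a * a + a * (d : ℝ[X]) * X ^ 2)))
        (d * d) = - Localization.mk (a * (d : ℝ[X]) - C (1 / ((n : ℝ) + 1)) *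
          (a * a + a * (d : ℝ[X]) * X ^ 2)) (d * d) := by rw [Localization.neg_mk]
    rw [h5, map_neg, map_neg, RM.L_split] at h1
    linarith
  have hlim : Tendsto (fun n => ∫ y, f n y ∂μ) atTop (𝓝 (L (Localization.mk a d))) := by
    simp_rw [hint]
    have h1 : Tendsto (fun n : ℕ => L (Localization.mk a d) - 1 / ((n : ℝ) + 1) * e) atTop
        (𝓝 (L (Localization.mk a d) - 0 * e)) :=
      tendsto_const_nhds.sub (RM.tendsto_e.mul tendsto_const_nhds)
    rw [zero_mul, sub_zero] at h1
    exact tendsto_of_tendsto_of_tendsto_of_le_of_le h1 tendsto_const_nhds hlb hub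
  let G : ℝ → ℝ≥0∞ := fun y => liminf (fun n => ENNReal.ofReal (f n y)) atTop
  have hmeas : ∀ n, Measurable (fun y => ENNReal.ofReal (f n y)) := fun n =>
    (f n).continuous.measurable.ennreal_ofReal
  have hGm : Measurable G := Measurable.liminf hmeas
  have hfi : ∀ n, Integrable (fun y => f n y) μ := fun n =>
    (f n).continuous.integrable_of_hasCompactSupport (f n).hasCompactSupport
  have hG : ∫⁻ y, G y ∂μ ≤ ENNReal.ofReal (L (Localization.mk a d)) := by
    refine (lintegral_liminf_le hmeas).trans ?_
    apply liminf_le_of_le (by isBoundedDefault)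
    intro b hb
    obtain ⟨n, hn⟩ := hb.exists
    refine hn.trans ?_
    rw [← ofReal_integral_eq_lintegral_ofReal (hfi n)
      (Eventually.of_forall fun y => RM.trunc_nonneg A D ha hd n y), hint]
    exact ENNReal.ofReal_le_ofReal (hub n)
  have hGfin : ∫⁻ y, G y ∂μ < ∞ := hG.trans_lt ENNReal.ofReal_lt_top
  have hG0 : ∀ y, D y = 0 → G y = ∞ := fun y hy =>
    (ENNReal.tendsto_ofReal_atTop.comp (RM.trunc_tendsto_top A D ha y hy)).liminf_eq
  have hG1 : ∀ y, D y ≠ 0 → G y = ENNReal.ofReal (A y / D y) := fun y hy =>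
    ((ENNReal.continuous_ofReal.tendsto _).comp (RM.trunc_tendsto A D y hy)).liminf_eq
  have hae : ∀ᵐ y ∂μ, D y ≠ 0 := by
    filter_upwards [ae_lt_top hGm hGfin.ne] with y hy h0
    exact hy.ne (hG0 y h0)
  have hnn : ∀ y, 0 ≤ A y / D y := fun y => div_nonneg (ha y).le (hd y)
  have hI : Integrable (fun y => A y / D y) μ := by
    refine ⟨(a.continuous.measurable.div (d : ℝ[X]).continuous.measurable).aestronglyMeasurable, ?_⟩
    rw [hasFiniteIntegral_iff_ofReal (Eventually.of_forall hnn)]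
    refine lt_of_le_of_lt (lintegral_mono_ae ?_) hGfin
    filter_upwards [hae] with y hy
    rw [hG1 y hy]
  refine ⟨?_, hI, ?_⟩
  · have := ae_iff.1 hae
    simpa [D] using this
  · refine tendsto_nhds_unique hlim ?_
    refine tendsto_integral_of_dominated_convergence _
      (fun n => (hfi n).aestronglyMeasurable) hI ?_ ?_
    · intro n
      filter_upwards [hae] with y hy
      rw [hf, Real.norm_eq_abs, abs_of_nonneg (RM.trunc_nonneg A D ha hd n y)]
      exact RM.trunc_le A D ha hd n y hy
    · filter_upwards [hae] with y hy
      exact RM.trunc_tendsto A D y hy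

/-- **Proposition 3.4 (one-dimensional rational moment problem).**
Let `ℰ` be a multiplicative set in `ℝ[y]` (with `1 ∈ ℰ`, `0 ∉ ℰ`) and
`B = ℰ⁻¹ℝ[y]`.  Every linear functional `L` on `B` that is nonnegative on
squares is given by a positive Borel measure `μ` on `ℝ` that vanishes on the
zero set of each `q ∈ ℰ`: `L(p/q) = ∫ p(y)/q(y) dμ(y)`. -/
theorem rational_moment_problem_one_dimensional
    (ℰ : Submonoid (Polynomial ℝ)) (hℰ : (0 : Polynomial ℝ) ∉ ℰ)
    (L : Localization ℰ →ₗ[ℝ] ℝ) (hL : ∀ b : Localization ℰ, 0 ≤ L (b ^ 2)) :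
    ∃ μ : MeasureTheory.Measure ℝ,
      (∀ q ∈ ℰ, μ {y : ℝ | Polynomial.eval y q = 0} = 0) ∧
      ∀ (p : Polynomial ℝ) (q : Polynomial ℝ) (hq : q ∈ ℰ),
        MeasureTheory.Integrable
          (fun y : ℝ => Polynomial.eval y p / Polynomial.eval y q) μ ∧
        L (Localization.mk p ⟨q, hq⟩) =
          ∫ y : ℝ, Polynomial.eval y p / Polynomial.eval y q ∂μ := by
  obtain ⟨Λ, hΛ⟩ := RM.exists_functional ℰ hℰ L hL
  have key := RM.key ℰ L Λ hΛ
  have hsq : ∀ (q : ℰ) (y : ℝ), 0 ≤ ((q * q : ℰ) : ℝ[X]).eval y := by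
    intro q y
    simp only [Submonoid.coe_mul, eval_mul]
    exact mul_self_nonneg _
  refine ⟨RealRMK.rieszMeasure Λ, ?_, ?_⟩
  · suffices H : ∀ q : ℰ, RealRMK.rieszMeasure Λ {y : ℝ | (q : ℝ[X]).eval y = 0} = 0 from
      fun q hq => H ⟨q, hq⟩
    intro q
    have h1 : ∀ y : ℝ, 0 < (1 : ℝ[X]).eval y := fun y => by rw [eval_one]; exact one_pos
    have h2 := (key 1 (q * q) h1 (hsq q)).1
    simpa only [Submonoid.coe_mul, eval_mul, mul_self_eq_zero] using h2
  · suffices H : ∀ (p : ℝ[X]) (q : ℰ),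
        Integrable (fun y : ℝ => p.eval y / (q : ℝ[X]).eval y) (RealRMK.rieszMeasure Λ) ∧
        L (Localization.mk p q) =
          ∫ y : ℝ, p.eval y / (q : ℝ[X]).eval y ∂(RealRMK.rieszMeasure Λ) from
      fun p q hq => H p ⟨q, hq⟩
    intro p q
    have hpos : ∀ (s : ℝ[X]) (y : ℝ), 0 < (s * s + 1).eval y := by
      intro s y
      simp only [eval_add, eval_mul, eval_one]
      have := mul_self_nonneg (s.eval y)
      linarith
    obtain ⟨-, hi1, hl1⟩ := key ((p + (q : ℝ[X])) * (p + (q : ℝ[X])) + 1) (q * q)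
      (hpos (p + (q : ℝ[X]))) (hsq q)
    obtain ⟨-, hi2, hl2⟩ := key ((p - (q : ℝ[X])) * (p - (q : ℝ[X])) + 1) (q * q)
      (hpos (p - (q : ℝ[X]))) (hsq q)
    have hfun : (fun y : ℝ => p.eval y / (q : ℝ[X]).eval y) = fun y =>
        (1 / 4 : ℝ) * (((p + (q : ℝ[X])) * (p + (q : ℝ[X])) + 1).eval y /
            ((q * q : ℰ) : ℝ[X]).eval y -
          ((p - (q : ℝ[X])) * (p - (q : ℝ[X])) + 1).eval y / ((q * q : ℰ) : ℝ[X]).eval y) := by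
      funext y
      simp only [Submonoid.coe_mul, eval_mul, eval_add, eval_sub, eval_one]
      by_cases h0 : (q : ℝ[X]).eval y = 0
      · simp [h0]
      · field_simp
        ring
    have hi := (hi1.sub hi2).const_mul (1 / 4 : ℝ)
    refine ⟨by rw [hfun]; exact hi, ?_⟩
    rw [hfun, integral_const_mul, integral_sub hi1 hi2, ← hl1, ← hl2]
    have h4 : Localization.mk p q = Localization.mk (p * q) (q * q) := by
      rw [← Localization.mk_mul, Localization.mk_self_mk]; simp
    have h5 : (p + (q : ℝ[X])) * (p + (q : ℝ[X])) + 1 =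
        ((p - (q : ℝ[X])) * (p - (q : ℝ[X])) + 1) + (4 : ℝ) • (p * q) := by
      rw [smul_eq_C_mul]
      simp only [map_ofNat]
      ring
    rw [h5, ← Localization.add_mk_self, ← Localization.smul_mk, map_add, map_smul, ← h4,
      smul_eq_mul]
    ring
end

section
/- Let ℰ be a finitely generated multiplicative set in ℝ[y], B := ℰ⁻¹ℝ[y], and let C be a finite-dimensional commutative unital ℝ-algebra. Let L be a linear functional on the ℝ-algebra B ⊗_ℝ C with L(w²) ≥ 0 for all w ∈ B ⊗_ℝ C. Then there exist n ∈ ℕ, unital ℝ-algebra homomorphisms η₁,…,η_n : C → ℝ, and positive Borel measures μ₁,…,μ_n on ℝ with μ_j({y ∈ ℝ : q(y) = 0}) = 0 for all q ∈ ℰ and j = 1,…,n, such that for all p ∈ ℝ[y], q ∈ ℰ and c ∈ C, the function y ↦ p(y)/q(y) is μ_j-integrable for each j and L((p/q) ⊗ c) = Σ_{j=1}^{n} η_j(c) · ∫_ℝ p(y)/q(y) dμ_j(y). -/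
open scoped TensorProduct

open MeasureTheory Filter Topology CompactlySupported in
lemma haviland_adapted {X : Type} [TopologicalSpace X] [T2Space X] [LocallyCompactSpace X]
    [MeasurableSpace X] [BorelSpace X] {B : Type} [CommRing B] [Algebra ℝ B]
    (ev : B →ₐ[ℝ] C(X, ℝ)) (L : B →ₗ[ℝ] ℝ)
    (hpos : ∀ b, (∀ x, 0 ≤ ev b x) → 0 ≤ L b)
    (f : B) (hf0 : ∀ x, 0 ≤ ev f x) (hf : ∀ r : ℝ, IsCompact {x | ev f x ≤ r}) :
    ∃ μ : Measure X, ∀ b, Integrable (fun x => ev b x) μ ∧ ∫ x, ev b x ∂μ = L b := by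
  let E : Submodule ℝ C(X, ℝ) :=
    { carrier := {g | ∃ b, ∀ x, |g x| ≤ ev b x}
      add_mem' := by
        rintro g h ⟨b, hb⟩ ⟨c, hc⟩
        refine ⟨b + c, fun x => ?_⟩
        have := abs_add_le (g x) (h x)
        simp only [map_add, ContinuousMap.add_apply]
        linarith [hb x, hc x]
      zero_mem' := ⟨0, fun x => by simp⟩
      smul_mem' := by
        rintro r g ⟨b, hb⟩
        refine ⟨|r| • b, fun x => ?_⟩
        simp only [map_smul, ContinuousMap.smul_apply, smul_eq_mul, abs_mul]
        exact mul_le_mul_of_nonneg_left (hb x) (abs_nonneg r) }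
  have hevE : ∀ b, ev b ∈ E := fun b => ⟨b ^ 2 + 1, fun x => by
    simp only [map_add, map_pow, map_one, ContinuousMap.add_apply, ContinuousMap.pow_apply,
      ContinuousMap.one_apply]
    rw [abs_le]; constructor <;> nlinarith [sq_nonneg (ev b x + 1), sq_nonneg (ev b x - 1)]⟩
  have hcE : ∀ g : C_c(X, ℝ), (g : C(X, ℝ)) ∈ E := by
    intro g
    obtain ⟨M, hM⟩ := g.hasCompactSupport.exists_bound_of_continuous g.continuous
    refine ⟨algebraMap ℝ B M, fun x => ?_⟩
    simpa using hM x
  let ev' : B →ₗ[ℝ] E := LinearMap.codRestrict E ev.toLinearMap hevE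
  have hev' : ∀ b x, (ev' b : C(X, ℝ)) x = ev b x := fun b x => rfl
  -- the cone of nonnegative functions
  let s : PointedCone ℝ E :=
    { carrier := {g | ∀ x, 0 ≤ (g : C(X, ℝ)) x}
      add_mem' := by
        intro g h hg hh x
        exact add_nonneg (hg x) (hh x)
      zero_mem' := fun x => le_rfl
      smul_mem' := by
        intro r g hg x
        exact mul_nonneg r.2 (hg x) }
  have hs : ∀ g : E, g ∈ s ↔ ∀ x, 0 ≤ (g : C(X, ℝ)) x := fun g => Iff.rfl
  obtain ⟨g0, hg0⟩ : ∃ g0 : E →ₗ[ℝ] ℝ, ∀ b, g0 (ev' b) = L b := by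
    have : L ∈ LinearMap.range ev'.dualMap := by
      rw [LinearMap.range_dualMap_eq_dualAnnihilator_ker, Submodule.mem_dualAnnihilator]
      intro b hb
      have hb' : ∀ x, ev b x = 0 := fun x => by
        rw [← hev', LinearMap.mem_ker.1 hb]; rfl
      have h1 := hpos b (fun x => (hb' x).ge)
      have h2 := hpos (-b) (fun x => by simp [hb' x])
      rw [map_neg] at h2
      linarith
    obtain ⟨g0, h⟩ := this
    exact ⟨g0, fun b => by rw [← h]; rfl⟩
  obtain ⟨G, hG, hGpos⟩ := riesz_extension s ⟨LinearMap.range ev', g0.domRestrict _⟩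
    (by
      rintro ⟨_, b, rfl⟩ hx
      change 0 ≤ g0 (ev' b)
      rw [hg0]
      exact hpos b hx)
    (by
      rintro ⟨g, b, hb⟩
      refine ⟨⟨ev' b, b, rfl⟩, fun x => ?_⟩
      change 0 ≤ ev b x + g x
      linarith [neg_abs_le (g x), hb x])
  have hGL : ∀ b, G (ev' b) = L b := fun b => by
    rw [← hg0]; exact hG ⟨ev' b, b, rfl⟩
  let ι : C_c(X, ℝ) →ₗ[ℝ] E :=
    { toFun := fun g => ⟨g, hcE g⟩
      map_add' := fun _ _ => rfl
      map_smul' := fun _ _ => rfl }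
  let Λ : C_c(X, ℝ) →ₚ[ℝ] ℝ := PositiveLinearMap.mk₀ (G ∘ₗ ι)
    (fun g hg => hGpos _ (fun x => hg x))
  have hΛ : ∀ g, Λ g = G (ι g) := fun g => rfl
  let μ := RealRMK.rieszMeasure Λ
  refine ⟨μ, ?_⟩
  have key : ∀ b, (∀ x, 0 ≤ ev b x) →
      Integrable (fun x => ev b x) μ ∧ ∫ x, ev b x ∂μ = L b := by
    intro b hb
    let ψ : ℕ → X → ℝ := fun n x => max 0 (1 - ev f x / (n + 1)) * ev b x
    have hψc : ∀ n, Continuous (ψ n) := fun n => by fun_prop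
    have hψs : ∀ n, HasCompactSupport (ψ n) := by
      intro n
      refine HasCompactSupport.intro (hf (n + 1)) (fun x hx => ?_)
      have hx : (n + 1 : ℝ) < ev f x := by simpa using hx
      have : 1 - ev f x / (n + 1) ≤ 0 := by
        rw [sub_nonpos, le_div_iff₀ (by positivity)]; linarith
      simp [ψ, max_eq_left this]
    let Ψ : ℕ → C_c(X, ℝ) := fun n => ⟨⟨ψ n, hψc n⟩, hψs n⟩
    have hint : ∀ n, ∫ x, ψ n x ∂μ = G (ι (Ψ n)) := fun n =>
      RealRMK.integral_rieszMeasure Λ (Ψ n)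
    have hψint : ∀ n, Integrable (ψ n) μ := fun n => (Ψ n).integrable
    have hψ0 : ∀ n x, 0 ≤ ψ n x := fun n x => mul_nonneg (le_max_left _ _) (hb x)
    have hle : ∀ n, ∫ x, ψ n x ∂μ ≤ L b := by
      intro n
      rw [hint, ← hGL, ← sub_nonneg, ← map_sub]
      refine hGpos _ (fun x => ?_)
      change 0 ≤ ev b x - ψ n x
      rw [sub_nonneg]
      refine mul_le_of_le_one_left (hb x) (max_le zero_le_one ?_)
      have : 0 ≤ ev f x / (n + 1) := div_nonneg (hf0 x) (by positivity)
      linarith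
    have hge : ∀ n : ℕ, L b - L (b * f) * (1 / ((n : ℝ) + 1)) ≤ ∫ x, ψ n x ∂μ := by
      intro n
      rw [hint, ← hGL, ← hGL, mul_comm, ← smul_eq_mul, ← map_smul, ← map_sub, ← sub_nonneg,
        ← map_sub]
      refine hGpos _ (fun x => ?_)
      change 0 ≤ ψ n x - (ev b x - 1 / ((n : ℝ) + 1) * ev (b * f) x)
      have := mul_le_mul_of_nonneg_right (le_max_right 0 (1 - ev f x / (n + 1))) (hb x)
      change _ ≤ ψ n x at this
      rw [map_mul, ContinuousMap.mul_apply]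
      have e : 1 / ((n : ℝ) + 1) * (ev b x * ev f x) = ev f x / (n + 1) * ev b x := by ring
      rw [e]; linarith
    have hlim : Tendsto (fun n => ∫ x, ψ n x ∂μ) atTop (𝓝 (L b)) := by
      refine tendsto_of_tendsto_of_tendsto_of_le_of_le ?_ tendsto_const_nhds hge hle
      simpa using (tendsto_const_nhds (x := L b)).sub
        ((tendsto_one_div_add_atTop_nhds_zero_nat (𝕜 := ℝ)).const_mul (L (b * f)))
    have hmono : ∀ x, Monotone (fun n => ψ n x) := by
      intro x m n hmn
      refine mul_le_mul_of_nonneg_right (max_le_max le_rfl ?_) (hb x)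
      have : ev f x / ((n : ℝ) + 1) ≤ ev f x / (m + 1) :=
        div_le_div_of_nonneg_left (hf0 x) (by positivity) (by gcongr)
      linarith
    have hpt : ∀ x, Tendsto (fun n => ψ n x) atTop (𝓝 (ev b x)) := by
      intro x
      have h1 : Tendsto (fun n : ℕ => 1 - ev f x / ((n : ℝ) + 1)) atTop (𝓝 1) := by
        simpa [div_eq_mul_inv] using (tendsto_const_nhds (x := (1 : ℝ))).sub
          ((tendsto_one_div_add_atTop_nhds_zero_nat (𝕜 := ℝ)).const_mul (ev f x))
      simpa using ((tendsto_const_nhds (x := (0 : ℝ))).max h1).mul_const (ev b x)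
    have hI : Integrable (fun x => ev b x) μ := by
      have hL0 : 0 ≤ L b := hpos b hb
      refine ⟨aestronglyMeasurable_of_tendsto_ae atTop (fun n => (hψint n).1)
        (ae_of_all _ hpt), ?_⟩
      have hF : ∫⁻ x, ‖ev b x‖ₑ ∂μ ≤ liminf (fun n => ∫⁻ x, ‖ψ n x‖ₑ ∂μ) atTop := by
        have e : ∀ x, ‖ev b x‖ₑ = liminf (fun n => ‖ψ n x‖ₑ) atTop := fun x =>
          ((hpt x).enorm).liminf_eq.symm
        simp_rw [e]
        exact lintegral_liminf_le' (fun n => (hψint n).1.aemeasurable.enorm)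
      refine lt_of_le_of_lt hF ?_
      refine lt_of_le_of_lt (b := ENNReal.ofReal (L b)) ?_ ENNReal.ofReal_lt_top
      refine liminf_le_of_le (by isBoundedDefault) (fun c hc => ?_)
      obtain ⟨n, hn⟩ := hc.exists
      refine hn.trans ?_
      rw [← ofReal_integral_norm_eq_lintegral_enorm (hψint n)]
      refine ENNReal.ofReal_le_ofReal ?_
      simpa only [Real.norm_of_nonneg (hψ0 n _)] using hle n
    exact ⟨hI, tendsto_nhds_unique (integral_tendsto_of_tendsto_of_monotone hψint hI
      (ae_of_all _ hmono) (ae_of_all _ hpt)) hlim⟩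
  intro b
  obtain ⟨h1, h2⟩ := key ((b + 1) ^ 2) (fun x => by simp; positivity)
  obtain ⟨h3, h4⟩ := key ((b - 1) ^ 2) (fun x => by simp; positivity)
  have hb : (fun x => ev b x) =
      fun x => (1 / 4 : ℝ) * (ev ((b + 1) ^ 2) x - ev ((b - 1) ^ 2) x) := by
    ext x; simp; ring
  have hb' : b = (1 / 4 : ℝ) • ((b + 1) ^ 2 - (b - 1) ^ 2) := by
    have : (b + 1) ^ 2 - (b - 1) ^ 2 = (4 : ℝ) • b := by
      rw [Algebra.smul_def, map_ofNat]; ring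
    rw [this, smul_smul]; norm_num
  constructor
  · rw [hb]; exact (h1.sub h3).const_mul _
  · rw [hb, integral_const_mul, integral_sub h1 h3, h2, h4]
    conv_rhs => rw [hb']
    simp

open Polynomial in
lemma isSumSq_of_nonneg (p : ℝ[X]) (hp : ∀ x, 0 ≤ p.eval x) : IsSumSq p := by
  induction hn : p.natDegree using Nat.strong_induction_on generalizing p with
  | _ n ih =>
  subst hn
  by_cases hdeg : p.natDegree = 0
  · obtain ⟨c, rfl⟩ := natDegree_eq_zero.1 hdeg
    have hc : 0 ≤ c := by simpa using hp 0
    rw [← Real.mul_self_sqrt hc, C_mul]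
    exact IsSumSq.mul_self _
  have hp0 : p ≠ 0 := by rintro rfl; simp at hdeg
  -- it suffices to split off a monic quadratic sum of squares nonnegative factor
  have red : ∀ q s : ℝ[X], p = q * s → q.natDegree = 2 → IsSumSq q → (∀ x, 0 ≤ s.eval x) →
      IsSumSq p := by
    intro q s hps hq hqs hs
    have hs0 : s ≠ 0 := by rintro rfl; simp at hps; exact hp0 hps
    have hq0 : q ≠ 0 := by rintro rfl; simp at hps; exact hp0 hps
    rw [hps]
    refine hqs.mul (ih _ ?_ s hs rfl)
    rw [hps, natDegree_mul hq0 hs0]; omega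
  have clos : ∀ (r : ℝ[X]) (a : ℝ), (∀ x, x ≠ a → 0 ≤ r.eval x) → 0 ≤ r.eval a := by
    intro r a h
    have hc : Filter.Tendsto (fun x => r.eval x) (nhdsWithin a {a}ᶜ) (nhds (r.eval a)) :=
      r.continuous.continuousAt.tendsto.mono_left nhdsWithin_le_nhds
    refine ge_of_tendsto hc ?_
    filter_upwards [self_mem_nhdsWithin] with x hx using h x hx
  by_cases hr : ∃ a, p.IsRoot a
  · obtain ⟨a, ha⟩ := hr
    obtain ⟨r, hr⟩ := dvd_iff_isRoot.2 ha
    have hra : r.eval a = 0 := by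
      have h1 : ∀ x, a < x → 0 ≤ r.eval x := by
        intro x hx
        have := hp x
        rw [hr] at this
        simp only [eval_mul, eval_sub, eval_X, eval_C] at this
        exact nonneg_of_mul_nonneg_right this (by linarith)
      have h2 : ∀ x, x < a → r.eval x ≤ 0 := by
        intro x hx
        have := hp x
        rw [hr] at this
        simp only [eval_mul, eval_sub, eval_X, eval_C] at this
        by_contra hh
        push Not at hh
        nlinarith
      apply le_antisymm
      · have hc : Filter.Tendsto (fun x => r.eval x) (nhdsWithin a (Set.Iio a)) (nhds (r.eval a)) :=
          r.continuous.continuousAt.tendsto.mono_left nhdsWithin_le_nhds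
        refine le_of_tendsto hc ?_
        filter_upwards [self_mem_nhdsWithin] with x hx using h2 x hx
      · have hc : Filter.Tendsto (fun x => r.eval x) (nhdsWithin a (Set.Ioi a)) (nhds (r.eval a)) :=
          r.continuous.continuousAt.tendsto.mono_left nhdsWithin_le_nhds
        refine ge_of_tendsto hc ?_
        filter_upwards [self_mem_nhdsWithin] with x hx using h1 x hx
    obtain ⟨s, hs⟩ := dvd_iff_isRoot.2 hra
    have hps : p = ((X - C a) * (X - C a)) * s := by rw [hr, hs]; ring
    refine red _ s hps ?_ (IsSumSq.mul_self _) ?_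
    · rw [natDegree_mul (X_sub_C_ne_zero a) (X_sub_C_ne_zero a)]; simp
    · have h : ∀ x, x ≠ a → 0 ≤ s.eval x := by
        intro x hx
        have := hp x
        rw [hps] at this
        simp only [eval_mul, eval_sub, eval_X, eval_C] at this
        exact nonneg_of_mul_nonneg_right this (mul_self_pos.2 (sub_ne_zero.2 hx))
      intro x
      by_cases hx : x = a
      · rw [hx]; exact clos s a h
      · exact h x hx
  · obtain ⟨z, hz⟩ := Complex.exists_root (f := p.map (algebraMap ℝ ℂ)) (by
      rw [degree_map]; exact natDegree_pos_iff_degree_pos.1 (Nat.pos_of_ne_zero hdeg))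
    have hz' : aeval z p = 0 := by simpa [IsRoot, eval_map, aeval_def] using hz
    have him : z.im ≠ 0 := by
      intro h
      apply hr
      refine ⟨z.re, ?_⟩
      have : z = ((z.re : ℝ) : ℂ) := by apply Complex.ext <;> simp [h]
      rw [this] at hz'
      have h2 := (aeval_algebraMap_apply ℂ z.re p).symm.trans hz'
      simpa [aeval_def, IsRoot] using h2
    obtain ⟨s, hs⟩ := quadratic_dvd_of_aeval_eq_zero_im_ne_zero p hz' him
    have hq : X ^ 2 - C (2 * z.re) * X + C (‖z‖ ^ 2) =
        (X - C z.re) * (X - C z.re) + C z.im * C z.im := by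
      rw [← Complex.normSq_eq_norm_sq, Complex.normSq_apply]
      simp only [C_add, C_mul, map_ofNat]; ring
    refine red _ s hs ?_ ?_ ?_
    · compute_degree!
    · rw [hq]; exact (IsSumSq.mul_self _).add (IsSumSq.mul_self _)
    · intro x
      have := hp x
      rw [hs, hq] at this
      simp only [eval_mul, eval_sub, eval_X, eval_C, eval_add] at this
      refine nonneg_of_mul_nonneg_right this ?_
      have := mul_self_pos.2 him
      nlinarith [mul_self_nonneg (x - z.re)]

open MeasureTheory Polynomial in
lemma rational_moment_one (ℰ : Submonoid ℝ[X]) (hfg : ℰ.FG)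
    (L : Localization ℰ →ₗ[ℝ] ℝ) (hL : ∀ b, 0 ≤ L (b ^ 2)) :
    ∃ μ : Measure ℝ, (∀ q ∈ ℰ, μ {y : ℝ | eval y q = 0} = 0) ∧
      ∀ (p q : ℝ[X]) (hq : q ∈ ℰ), Integrable (fun y : ℝ => eval y p / eval y q) μ ∧
        L (Localization.mk p ⟨q, hq⟩) = ∫ y : ℝ, eval y p / eval y q ∂μ := by
  obtain ⟨S, hS⟩ := hfg
  let d : ℝ[X] := ∏ q ∈ S, q
  have hd : d ∈ ℰ := Submonoid.prod_mem _ (fun q hq => hS ▸ Submonoid.subset_closure hq)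
  have hzero : ∀ q ∈ ℰ, ∀ y : ℝ, eval y d ≠ 0 → eval y q ≠ 0 := by
    intro q hq y hy
    rw [← hS] at hq
    induction hq using Submonoid.closure_induction with
    | mem q hq =>
      intro h
      apply hy
      obtain ⟨r, hr⟩ := Finset.dvd_prod_of_mem (fun q : ℝ[X] => q) hq
      change d = q * r at hr
      rw [hr, eval_mul, h, zero_mul]
    | one => simp
    | mul a b _ _ ha hb => rw [eval_mul]; exact mul_ne_zero ha hb
  have hopen : IsOpen {y : ℝ | eval y d ≠ 0} := isOpen_ne_fun d.continuous continuous_const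
  let X' : Type := {y : ℝ | eval y d ≠ 0}
  have : LocallyCompactSpace X' := hopen.locallyCompactSpace
  let f0 : ℝ[X] →ₐ[ℝ] C(X', ℝ) := aeval (⟨Subtype.val, continuous_subtype_val⟩ : C(X', ℝ))
  have hf0 : ∀ p (x : X'), f0 p x = eval x.1 p := by
    intro p x
    have := Polynomial.aeval_algHom_apply (ContinuousMap.evalAlgHom ℝ ℝ x)
      (⟨Subtype.val, continuous_subtype_val⟩ : C(X', ℝ)) p
    change ContinuousMap.evalAlgHom ℝ ℝ x (f0 p) = _
    rw [← this]
    simp [Polynomial.aeval_def, Polynomial.eval₂_eq_eval_map]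
  have hunit : ∀ q : ℰ, IsUnit (f0 q) := by
    intro q
    rw [ContinuousMap.isUnit_iff_forall_ne_zero]
    intro x
    rw [hf0]
    exact hzero q q.2 x.1 x.2
  let ev : Localization ℰ →ₐ[ℝ] C(X', ℝ) := IsLocalization.liftAlgHom (M := ℰ) (f := f0) hunit
  have hev : ∀ p q (hq : q ∈ ℰ) (x : X'),
      ev (Localization.mk p ⟨q, hq⟩) x = eval x.1 p / eval x.1 q := by
    intro p q hq x
    rw [eq_div_iff (hzero q hq x.1 x.2), ← hf0 q, ← hf0 p]
    have h1 : ∀ r, ev (algebraMap _ _ r) = f0 r := fun r => by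
      simp [ev]
    rw [← h1 q, ← h1 p, ← ContinuousMap.mul_apply, ← map_mul]
    congr 2
    rw [Localization.mk_eq_mk']
    exact IsLocalization.mk'_spec _ p ⟨q, hq⟩
  have hpos : ∀ b, (∀ x, 0 ≤ ev b x) → 0 ≤ L b := by
    intro b hb
    induction b using Localization.induction_on with
    | H pq =>
    obtain ⟨p, q, hq⟩ := pq
    have hsq : IsSumSq (p * q * d ^ 2) := by
      apply isSumSq_of_nonneg
      intro y
      simp only [eval_mul, eval_pow]
      by_cases hy : eval y d = 0
      · simp [hy]
      · have h := hb ⟨y, hy⟩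
        rw [hev p q hq] at h
        have hqy := hzero q hq y hy
        have : eval y p * eval y q = eval y p / eval y q * (eval y q) ^ 2 := by
          field_simp
        rw [this]
        dsimp only at h
        positivity
    have e : Localization.mk p ⟨q, hq⟩ =
        algebraMap _ (Localization ℰ) (p * q * d ^ 2) * (Localization.mk 1 (⟨q, hq⟩ * ⟨d, hd⟩)) ^ 2 := by
      rw [← Localization.mk_one_eq_algebraMap, Localization.mk_pow, Localization.mk_mul,
        Localization.mk_eq_mk_iff, Localization.r_iff_exists]
      refine ⟨1, ?_⟩
      simp
      ring
    rw [e]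
    generalize Localization.mk 1 (⟨q, hq⟩ * ⟨d, hd⟩) = t
    clear e
    generalize p * q * d ^ 2 = P at hsq
    induction hsq with
    | zero => simp
    | sq_add a _ ih =>
      rw [map_add, add_mul, map_add]
      refine add_nonneg ?_ ih
      have := hL (algebraMap _ (Localization ℰ) a * t)
      rwa [mul_pow, pow_two (algebraMap _ (Localization ℰ) a), ← map_mul] at this
  let f : Localization ℰ := Localization.mk X 1 ^ 2 + Localization.mk 1 ⟨d, hd⟩ ^ 2
  have hf : ∀ x : X', ev f x = x.1 ^ 2 + (1 / eval x.1 d) ^ 2 := by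
    intro x
    have h1 := hev X 1 (one_mem _) x
    have h2 := hev 1 d hd x
    simp only [eval_X, eval_one, div_one] at h1 h2
    simp only [f, map_add, map_pow, ContinuousMap.add_apply, ContinuousMap.pow_apply]
    rw [h2, ← h1]; rfl
  obtain ⟨μ, hμ⟩ := haviland_adapted ev L hpos f (fun x => by rw [hf]; positivity) (by
    intro r
    rw [Subtype.isCompact_iff]
    have e : Subtype.val '' {x : X' | ev f x ≤ r} =
        {y : ℝ | y ^ 2 * (eval y d) ^ 2 + 1 ≤ r * (eval y d) ^ 2} := by
      ext y
      simp only [Set.mem_image, Set.mem_ofPred_eq]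
      constructor
      · rintro ⟨x, hx, rfl⟩
        change ev f x ≤ r at hx
        rw [hf] at hx
        have h2 : eval x.1 d ≠ 0 := x.2
        have := mul_le_mul_of_nonneg_right hx (sq_nonneg (eval x.1 d))
        have e : (x.1 ^ 2 + (1 / eval x.1 d) ^ 2) * eval x.1 d ^ 2 =
          x.1 ^ 2 * eval x.1 d ^ 2 + 1 := by field_simp
        linarith
      · intro hy
        have h2 : eval y d ≠ 0 := by intro h; rw [h] at hy; norm_num at hy
        refine ⟨⟨y, h2⟩, ?_, rfl⟩
        change ev f _ ≤ r
        rw [hf]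
        dsimp only
        have e : (y ^ 2 + (1 / eval y d) ^ 2) * eval y d ^ 2 =
          y ^ 2 * eval y d ^ 2 + 1 := by field_simp
        rw [← e] at hy
        exact le_of_mul_le_mul_right hy (by positivity)
    refine e ▸ ?_
    refine (isCompact_Icc (a := -(|r| + 1)) (b := |r| + 1)).of_isClosed_subset ?_ ?_
    · exact isClosed_le (by fun_prop) (by fun_prop)
    · intro y hy
      simp only [Set.mem_ofPred_eq] at hy
      have h2 : eval y d ≠ 0 := by intro h; rw [h] at hy; norm_num at hy
      have h3 : 0 < eval y d ^ 2 := by positivity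
      have h4 : y ^ 2 ≤ r := by
        by_contra h
        push Not at h
        nlinarith
      have h5 := le_abs_self r
      have h6 := abs_nonneg r
      rw [Set.mem_Icc, ← abs_le]
      refine abs_le_of_sq_le_sq ?_ (by linarith)
      nlinarith)
  have hme : MeasurableEmbedding (Subtype.val : X' → ℝ) :=
    MeasurableEmbedding.subtype_coe hopen.measurableSet
  refine ⟨μ.map Subtype.val, ?_, ?_⟩
  · intro q hq
    rw [hme.map_apply]
    convert measure_empty (μ := μ)
    ext x
    simpa using hzero q hq x.1 x.2
  · intro p q hq
    obtain ⟨h1, h2⟩ := hμ (Localization.mk p ⟨q, hq⟩)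
    simp only [hev p q hq] at h1 h2
    refine ⟨hme.integrable_map_iff.2 h1, ?_⟩
    rw [hme.integral_map, ← h2]

/-- A functional nonnegative on squares kills nilpotents. -/
lemma map_nilpotent_eq_zero {T : Type} [CommRing T] [Algebra ℝ T] (L : T →ₗ[ℝ] ℝ)
    (hL : ∀ w, 0 ≤ L (w ^ 2)) (w : T) (hw : IsNilpotent w) : L w = 0 := by
  have step : ∀ w, L (w ^ 2) = 0 → L w = 0 := by
    intro w h
    have key : ∀ t : ℝ, 0 ≤ L 1 + 2 * t * L w := by
      intro t
      have := hL (1 + t • w)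
      have e : (1 + t • w) ^ 2 = 1 + (2 * t) • w + (t ^ 2) • w ^ 2 := by
        simp only [Algebra.smul_def, map_mul, map_pow, map_ofNat]; ring
      rw [e, map_add, map_add, map_smul, map_smul, h] at this
      simpa using this
    by_contra hne
    have := key (-(L 1 + 1) / (2 * L w))
    have e : 2 * (-(L 1 + 1) / (2 * L w)) * L w = -(L 1 + 1) := by field_simp
    rw [e] at this
    linarith
  have iter : ∀ (k : ℕ) (w : T), w ^ (2 ^ k) = 0 → L w = 0 := by
    intro k
    induction k with
    | zero => intro w h; simp at h; simp [h]
    | succ k ih =>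
      intro w h
      apply step
      apply ih
      rw [← pow_mul, ← pow_succ']; exact h
  obtain ⟨n, hn⟩ := hw
  exact iter n w (pow_eq_zero_of_le Nat.lt_two_pow_self.le hn)

/-- **Corollary 3.3.**  Let `ℰ` be a finitely generated multiplicative set in
`ℝ[y]`, `B = ℰ⁻¹ℝ[y]`, and let `C` be a finite-dimensional commutative unital
real algebra.  Every linear functional `L` on `B ⊗ C` that is nonnegative on
squares is of the form
`L((p/q) ⊗ c) = Σ_j η_j(c) ∫ p/q dμ_j` for finitely many characters `η_j` of
`C` and measures `μ_j` on `ℝ` vanishing on the zero sets of elements of `ℰ`. -/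
theorem rational_moment_problem_tensor_finite
    (ℰ : Submonoid (Polynomial ℝ)) (hℰ : (0 : Polynomial ℝ) ∉ ℰ) (hfg : ℰ.FG)
    (C : Type) [CommRing C] [Algebra ℝ C] [FiniteDimensional ℝ C]
    (L : (Localization ℰ ⊗[ℝ] C) →ₗ[ℝ] ℝ)
    (hL : ∀ w : Localization ℰ ⊗[ℝ] C, 0 ≤ L (w ^ 2)) :
    ∃ (n : ℕ) (η : Fin n → (C →ₐ[ℝ] ℝ)) (μ : Fin n → MeasureTheory.Measure ℝ),
      (∀ (j : Fin n), ∀ q ∈ ℰ, μ j {y : ℝ | Polynomial.eval y q = 0} = 0) ∧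
      ∀ (p : Polynomial ℝ) (q : Polynomial ℝ) (hq : q ∈ ℰ) (c : C),
        (∀ j : Fin n,
          MeasureTheory.Integrable
            (fun y : ℝ => Polynomial.eval y p / Polynomial.eval y q) (μ j)) ∧
        L ((Localization.mk p ⟨q, hq⟩) ⊗ₜ[ℝ] c) =
          ∑ j : Fin n, η j c * ∫ y : ℝ, Polynomial.eval y p / Polynomial.eval y q ∂(μ j) := by
  classical
  have hnil : ∀ w : Localization ℰ ⊗[ℝ] C, IsNilpotent w → L w = 0 :=
    map_nilpotent_eq_zero (T := Localization ℰ ⊗[ℝ] C) L hL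
  have : IsArtinianRing C := IsArtinianRing.of_finite ℝ C
  have : Fintype (MaximalSpectrum C) := Fintype.ofFinite _
  let mk : ∀ I : MaximalSpectrum C, C →ₐ[ℝ] C ⧸ I.asIdeal := fun I => Ideal.Quotient.mkₐ ℝ I.asIdeal
  have hsurj : ∀ v : (∀ I : MaximalSpectrum C, C ⧸ I.asIdeal), ∃ c : C, ∀ I, mk I c = v I := by
    intro v
    obtain ⟨c, hc⟩ := Ideal.Quotient.mk_surjective
      ((IsArtinianRing.quotNilradicalEquivPi C).symm v)
    refine ⟨c, fun I => ?_⟩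
    have h2 : IsArtinianRing.quotNilradicalEquivPi C (Ideal.Quotient.mk _ c) = v := by
      rw [hc, AlgEquiv.apply_symm_apply]
    rw [← h2]
    rfl
  have hker : ∀ c : C, (∀ I, mk I c = 0) → IsNilpotent c := by
    intro c hc
    rw [← mem_nilradical, IsArtinianRing.nilradical_eq_iInf, Ideal.mem_iInf]
    exact fun I => Ideal.Quotient.eq_zero_iff_mem.1 (hc I)
  have hcong : ∀ (b : Localization ℰ) (c c' : C), (∀ I, mk I c = mk I c') →
      L (b ⊗ₜ[ℝ] c) = L (b ⊗ₜ[ℝ] c') := by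
    intro b c c' h
    rw [← sub_eq_zero, ← map_sub, ← TensorProduct.tmul_sub]
    apply hnil
    obtain ⟨n, hn⟩ := hker (c - c') (fun I => by rw [map_sub, h, sub_self])
    exact ⟨n, by rw [Algebra.TensorProduct.tmul_pow, hn, TensorProduct.tmul_zero]⟩
  have hexe : ∀ I : MaximalSpectrum C, ∃ c : C, ∀ J, mk J c = if J = I then 1 else 0 :=
    fun I => hsurj (fun J => if J = I then 1 else 0)
  choose e he using hexe
  have hdecomp : ∀ b c, L (b ⊗ₜ[ℝ] c) = ∑ I, L (b ⊗ₜ[ℝ] (c * e I)) := by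
    intro b c
    rw [← map_sum, ← TensorProduct.tmul_sum, ← Finset.mul_sum]
    apply hcong
    intro J
    rw [map_mul, map_sum]
    simp [he]
  have hcomplex : ∀ I : MaximalSpectrum C, IsEmpty ((C ⧸ I.asIdeal) →ₐ[ℝ] ℝ) →
      ∀ b c, L (b ⊗ₜ[ℝ] (c * e I)) = 0 := by
    intro I hI
    have hsq : ∀ c : C, ∃ s : C, mk I (s ^ 2) = mk I c := by
      intro c
      let _ : Field (C ⧸ I.asIdeal) := Ideal.Quotient.field I.asIdeal
      have hφ : Nonempty ((C ⧸ I.asIdeal) ≃ₐ[ℝ] ℂ) := by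
        rcases Real.nonempty_algEquiv_or (C ⧸ I.asIdeal) with h | h
        · exact (hI.false h.some.toAlgHom).elim
        · exact h
      obtain ⟨φ⟩ := hφ
      obtain ⟨z, hz⟩ := IsAlgClosed.exists_pow_nat_eq (φ (mk I c)) (n := 2) (by norm_num)
      obtain ⟨s, hs⟩ := Ideal.Quotient.mk_surjective (φ.symm z)
      refine ⟨s, ?_⟩
      rw [map_pow]
      change (Ideal.Quotient.mk _ s) ^ 2 = _
      rw [hs, ← map_pow, hz, AlgEquiv.symm_apply_apply]
    have h1 : ∀ b c, 0 ≤ L ((b ^ 2) ⊗ₜ[ℝ] (c * e I)) := by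
      intro b c
      obtain ⟨s, hs⟩ := hsq c
      have := hL (b ⊗ₜ[ℝ] (s * e I))
      rw [Algebra.TensorProduct.tmul_pow] at this
      rw [hcong _ (c * e I) ((s * e I) ^ 2)]
      · exact this
      · intro J
        by_cases hJ : J = I
        · subst hJ
          rw [mul_pow, map_mul, map_mul, map_pow _ (e _), hs, he]; simp
        · rw [mul_pow, map_mul, map_mul, map_pow _ (e _), he]; simp [hJ]
    have h2 : ∀ b c, L ((b ^ 2) ⊗ₜ[ℝ] (c * e I)) = 0 := by
      intro b c
      apply le_antisymm _ (h1 b c)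
      have := h1 b (-c)
      have h0 : L ((b ^ 2) ⊗ₜ[ℝ] (c * e I)) + L ((b ^ 2) ⊗ₜ[ℝ] (-c * e I)) = 0 := by
        rw [← map_add, ← TensorProduct.tmul_add, neg_mul, add_neg_cancel,
          TensorProduct.tmul_zero, map_zero]
      linarith
    intro b c
    have hb : (b + 1) ^ 2 - (b - 1) ^ 2 = (4 : ℝ) • b := by
      rw [Algebra.smul_def, map_ofNat]; ring
    have h3 : L (((4 : ℝ) • b) ⊗ₜ[ℝ] (c * e I)) = 0 := by
      rw [← hb, TensorProduct.sub_tmul, map_sub, h2, h2, sub_zero]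
    rw [← TensorProduct.smul_tmul', map_smul] at h3
    simpa using h3
  let R := {I : MaximalSpectrum C // Nonempty ((C ⧸ I.asIdeal) →ₐ[ℝ] ℝ)}
  let η' : R → (C →ₐ[ℝ] ℝ) := fun I => I.2.some.comp (mk I.1)
  have hη : ∀ (I : R) b c, L (b ⊗ₜ[ℝ] (c * e I.1)) = η' I c * L (b ⊗ₜ[ℝ] e I.1) := by
    intro I b c
    rw [← smul_eq_mul (η' I c), ← map_smul L, ← TensorProduct.tmul_smul]
    apply hcong
    intro J
    by_cases hJ : J = I.1
    · subst hJ
      rw [map_mul, map_smul, he, if_pos rfl, mul_one]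
      let _ : Field (C ⧸ I.1.asIdeal) := Ideal.Quotient.field I.1.asIdeal
      apply (I.2.some : (C ⧸ I.1.asIdeal) →ₐ[ℝ] ℝ).toRingHom.injective
      change I.2.some (mk I.1 c) = I.2.some ((η' I c) • (1 : C ⧸ I.1.asIdeal))
      rw [map_smul, map_one, smul_eq_mul, mul_one]
      rfl
    · rw [map_mul, map_smul, he]; simp [hJ]
  have hμ : ∀ I : R, _ := fun I => rational_moment_one ℰ hfg
    (L ∘ₗ (TensorProduct.mk ℝ (Localization ℰ) C).flip (e I.1)) (by
      intro b
      change 0 ≤ L ((b ^ 2) ⊗ₜ[ℝ] (e I.1))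
      rw [hcong _ (e I.1) (e I.1 ^ 2), ← Algebra.TensorProduct.tmul_pow]
      · exact hL _
      · intro J
        rw [map_pow, he]
        split_ifs <;> simp)
  choose μ' hμ0 hμ1 using hμ
  let σ := Fintype.equivFin R
  refine ⟨Fintype.card R, fun j => η' (σ.symm j), fun j => μ' (σ.symm j),
    fun j q hq => hμ0 _ q hq, fun p q hq c => ⟨fun j => (hμ1 _ p q hq).1, ?_⟩⟩
  rw [hdecomp, σ.symm.sum_comp (fun I : R => η' I c *
    ∫ y : ℝ, Polynomial.eval y p / Polynomial.eval y q ∂(μ' I))]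
  have h1 : ∀ I : R, η' I c * ∫ y : ℝ, Polynomial.eval y p / Polynomial.eval y q ∂(μ' I) =
      L ((Localization.mk p ⟨q, hq⟩) ⊗ₜ[ℝ] (c * e I.1)) := by
    intro I
    rw [hη, ← (hμ1 I p q hq).2]
    rfl
  simp_rw [h1]
  rw [← Fintype.sum_subtype_add_sum_subtype
    (fun I : MaximalSpectrum C => Nonempty ((C ⧸ I.asIdeal) →ₐ[ℝ] ℝ))]
  rw [add_eq_left]
  refine Finset.sum_eq_zero (fun I _ => hcomplex I.1 (not_nonempty_iff.1 I.2) _ _)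
end

section
/- Let ℰ be a multiplicative set in ℝ[y] and B := ℰ⁻¹ℝ[y]. For p ∈ ℝ[y] and q ∈ ℰ, the element p/q of B is a sum of squares in B (i.e. there exist finitely many b₁,…,b_r ∈ B with p/q = b₁² + ⋯ + b_r²) if and only if p(y)/q(y) ≥ 0 for every y ∈ ℝ with q(y) ≠ 0. -/
open Polynomial in
lemma nonneg_of_nonneg_off_roots (s g : ℝ[X]) (hs : s ≠ 0)
    (h : ∀ y, s.eval y ≠ 0 → 0 ≤ g.eval y) (y : ℝ) : 0 ≤ g.eval y := by
  have hfin : {y : ℝ | s.IsRoot y}.Finite := Polynomial.finite_setOfPred_isRoot hs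
  have hd : Dense ({y : ℝ | s.IsRoot y}ᶜ) := Set.Countable.dense_compl ℝ (Set.Finite.countable hfin)
  have hc : IsClosed {y : ℝ | 0 ≤ g.eval y} :=
    isClosed_le continuous_const g.continuous
  have hsub : closure ({y : ℝ | s.IsRoot y}ᶜ) ⊆ {y : ℝ | 0 ≤ g.eval y} :=
    hc.closure_subset_iff.2 (fun z hz => h z hz)
  exact hsub (hd y)

open Polynomial in
lemma two_sq_mul {f g : ℝ[X]} (hf : ∃ u v, f = u ^ 2 + v ^ 2)
    (hg : ∃ u v, g = u ^ 2 + v ^ 2) : ∃ u v, f * g = u ^ 2 + v ^ 2 := by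
  obtain ⟨a, b, rfl⟩ := hf
  obtain ⟨c, d, rfl⟩ := hg
  exact ⟨a * c - b * d, a * d + b * c, by ring⟩

open Polynomial in
lemma two_sq_of_nonneg (n : ℕ) : ∀ f : ℝ[X], f.natDegree = n → (∀ y, 0 ≤ f.eval y) →
    ∃ u v, f = u ^ 2 + v ^ 2 := by
  induction n using Nat.strong_induction_on with
  | _ n ih =>
  intro f hn hf
  by_cases h0 : f.natDegree = 0
  · obtain ⟨c, rfl⟩ := natDegree_eq_zero.1 h0
    have hc : 0 ≤ c := by simpa using hf 0
    refine ⟨C (Real.sqrt c), 0, ?_⟩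
    rw [← C_pow, Real.sq_sqrt hc]; simp
  -- factor a nonnegative quadratic
  have key : ∀ Q h : ℝ[X], f = Q * h → Q.natDegree = 2 → (∀ y, 0 ≤ Q.eval y) →
      (∃ u v, Q = u ^ 2 + v ^ 2) → ∃ u v, f = u ^ 2 + v ^ 2 := by
    intro Q h hfac hdeg hQ hQs
    have hQ0 : Q ≠ 0 := by rintro rfl; simp at hdeg
    have hh0 : h ≠ 0 := by rintro rfl; simp [hfac] at h0
    have hd : f.natDegree = 2 + h.natDegree := by
      rw [hfac, natDegree_mul hQ0 hh0, hdeg]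
    have hh : ∀ y, 0 ≤ h.eval y := by
      apply nonneg_of_nonneg_off_roots Q h hQ0
      intro y hy
      have h1 := hf y
      rw [hfac, eval_mul] at h1
      exact nonneg_of_mul_nonneg_right h1 (lt_of_le_of_ne (hQ y) (Ne.symm hy))
    rw [hfac]
    exact two_sq_mul hQs (ih _ (by omega) h rfl hh)
  obtain ⟨z, hz⟩ := IsAlgClosed.exists_aeval_eq_zero ℂ f
    (fun h => h0 (natDegree_eq_of_degree_eq_some h))
  by_cases him : z.im = 0
  · have hz' : z = ((z.re : ℝ) : ℂ) := by apply Complex.ext <;> simp [him]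
    have hroot : f.eval z.re = 0 := by
      rw [hz'] at hz
      have h2 : aeval ((algebraMap ℝ ℂ) z.re) f = 0 := hz
      rw [aeval_algebraMap_apply] at h2
      simpa using h2
    set a := z.re
    obtain ⟨g, hg⟩ := dvd_iff_isRoot.2 hroot
    have hmin : IsLocalMin (fun y => f.eval y) a :=
      Filter.Eventually.of_forall (fun y => by simpa [hroot] using hf y)
    have hder := hmin.deriv_eq_zero
    rw [Polynomial.deriv, hg] at hder
    have hga : g.eval a = 0 := by simpa [derivative_mul] using hder
    obtain ⟨h, hh⟩ := dvd_iff_isRoot.2 hga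
    refine key ((X - C a) ^ 2) h (by rw [hg, hh]; ring) (by simp) ?_ ⟨X - C a, 0, by ring⟩
    intro y; rw [eval_pow]; positivity
  · obtain ⟨h, hh⟩ := quadratic_dvd_of_aeval_eq_zero_im_ne_zero f hz him
    have hQ : (X ^ 2 - C (2 * z.re) * X + C (‖z‖ ^ 2) : ℝ[X])
        = (X - C z.re) ^ 2 + (C z.im) ^ 2 := by
      rw [← Complex.normSq_eq_norm_sq, Complex.normSq_apply]
      simp only [map_add, map_mul, C_ofNat]
      ring
    refine key _ h hh ?_ ?_ ⟨_, _, hQ⟩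
    · compute_degree!
    · intro y; rw [hQ, eval_add, eval_pow, eval_pow]; positivity

/-- **Lemma 3.5.**  Let `ℰ` be a multiplicative set in `ℝ[y]` (with `1 ∈ ℰ`,
`0 ∉ ℰ`) and `B = ℰ⁻¹ℝ[y]`.  An element `p/q` of `B` (with `p ∈ ℝ[y]`,
`q ∈ ℰ`) is a sum of squares in `B` if and only if `p(y)/q(y) ≥ 0` for every
`y ∈ ℝ` with `q(y) ≠ 0`. -/
theorem sum_of_squares_iff_nonneg_in_localization
    (ℰ : Submonoid (Polynomial ℝ)) (hℰ : (0 : Polynomial ℝ) ∉ ℰ)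
    (p : Polynomial ℝ) (q : Polynomial ℝ) (hq : q ∈ ℰ) :
    (∃ (r : ℕ) (b : Fin r → Localization ℰ),
        Localization.mk p ⟨q, hq⟩ = ∑ i : Fin r, (b i) ^ 2) ↔
      ∀ y : ℝ, Polynomial.eval y q ≠ 0 →
        0 ≤ Polynomial.eval y p / Polynomial.eval y q := by
  constructor
  · rintro ⟨r, b, hb⟩
    obtain ⟨s, hs⟩ := IsLocalization.exist_integer_multiples_of_finite ℰ b
    choose a ha using hs
    have hinj : Function.Injective (algebraMap (Polynomial ℝ) (Localization ℰ)) :=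
      IsLocalization.injective _ (le_nonZeroDivisors_of_noZeroDivisors hℰ)
    have hs0 : (s : Polynomial ℝ) ≠ 0 := fun h => hℰ (h ▸ s.2)
    have h1 : algebraMap (Polynomial ℝ) (Localization ℰ) q * Localization.mk p ⟨q, hq⟩
        = algebraMap _ _ p := by
      rw [Localization.mk_eq_mk']
      exact IsLocalization.mk'_spec' _ p (⟨q, hq⟩ : ℰ)
    have hpoly : p * (s : Polynomial ℝ) ^ 2 = q * ∑ i, a i ^ 2 := by
      apply hinj
      simp only [map_mul, map_pow, map_sum, ha, Algebra.smul_def, mul_pow]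
      rw [← Finset.mul_sum, ← hb, ← h1]
      ring
    have hpq : ∀ y, 0 ≤ (p * q).eval y := by
      apply nonneg_of_nonneg_off_roots s _ hs0
      intro y hy
      have h2 := congrArg (Polynomial.eval y) hpoly
      simp only [Polynomial.eval_mul, Polynomial.eval_pow, Polynomial.eval_finsetSum] at h2 ⊢
      have h3 : 0 ≤ ∑ i, (a i).eval y ^ 2 := Finset.sum_nonneg fun i _ => sq_nonneg _
      have h4 : 0 < (s : Polynomial ℝ).eval y ^ 2 := by positivity
      refine nonneg_of_mul_nonneg_left (b := (s : Polynomial ℝ).eval y ^ 2) ?_ h4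
      have h5 : p.eval y * q.eval y * (s : Polynomial ℝ).eval y ^ 2
          = q.eval y ^ 2 * ∑ i, (a i).eval y ^ 2 := by
        linear_combination q.eval y * h2
      rw [h5]; positivity
    intro y hy
    have := hpq y
    rw [Polynomial.eval_mul] at this
    rw [← mul_div_mul_right _ _ hy]
    exact div_nonneg this (mul_self_nonneg _)
  · intro h
    have hpq : ∀ y, 0 ≤ (p * q).eval y := by
      intro y
      rw [Polynomial.eval_mul]
      by_cases hy : q.eval y = 0
      · simp [hy]
      · have := mul_nonneg (h y hy) (mul_self_nonneg (q.eval y))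
        rwa [← mul_assoc, div_mul_cancel₀ _ hy] at this
    obtain ⟨u, v, huv⟩ := two_sq_of_nonneg _ (p * q) rfl hpq
    refine ⟨2, ![Localization.mk u ⟨q, hq⟩, Localization.mk v ⟨q, hq⟩], ?_⟩
    simp only [Fin.sum_univ_two, Matrix.cons_val_zero, Matrix.cons_val_one,
      Localization.mk_pow]
    rw [Localization.add_mk_self, ← huv, Localization.mk_eq_mk_iff, Localization.r_iff_exists]
    refine ⟨1, ?_⟩
    simp only [SubmonoidClass.mk_pow]
    ring
end

section
/- Let 𝔻 be a multiplicative set in ℝ[x₁,…,x_d], A := 𝔻⁻¹ℝ[x₁,…,x_d], and let C_c(ℝ^d) denote the space of continuous compactly supported real functions on ℝ^d. Let L be a linear functional on the real vector space A × C_c(ℝ^d) such that L(p/q, φ) ≥ 0 whenever p ∈ ℝ[x₁,…,x_d], q ∈ 𝔻 and φ ∈ C_c(ℝ^d) satisfy p(x)/q(x) + φ(x) ≥ 0 for all x ∈ ℝ^d with q(x) ≠ 0. Then there exists a positive Borel measure μ on ℝ^d with μ(Z(q)) = 0 for every q ∈ 𝔻 such that for all p ∈ ℝ[x₁,…,x_d]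 and q ∈ 𝔻 the function x ↦ p(x)/q(x) is μ-integrable and L(p/q, 0) = ∫_{ℝ^d} p(x)/q(x) dμ(x). -/
namespace AuxPF
open MeasureTheory Filter Topology
variable {d : ℕ}

noncomputable def cutoff (d n : ℕ) (x : Fin d → ℝ) : ℝ := max 0 (min 1 ((n:ℝ) + 2 - ‖x‖))

lemma cutoff_nonneg (n : ℕ) (x : Fin d → ℝ) : 0 ≤ cutoff d n x := le_max_left _ _
lemma cutoff_le_one (n : ℕ) (x : Fin d → ℝ) : cutoff d n x ≤ 1 :=
  max_le zero_le_one (min_le_left _ _)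
lemma cutoff_eq_one (n : ℕ) (x : Fin d → ℝ) (h : ‖x‖ ≤ n + 1) : cutoff d n x = 1 := by
  unfold cutoff
  rw [min_eq_left (by linarith), max_eq_right zero_le_one]
lemma cutoff_cont (n : ℕ) : Continuous (cutoff d n) := by
  unfold cutoff; fun_prop
lemma cutoff_supp (n : ℕ) : HasCompactSupport (cutoff d n) := by
  apply HasCompactSupport.intro (isCompact_closedBall (0 : Fin d → ℝ) (n+2))
  intro x hx
  simp only [Metric.mem_closedBall, dist_zero_right, not_le] at hx
  unfold cutoff
  apply max_eq_left
  exact (min_le_right _ _).trans (by linarith)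

lemma den_pos (n : ℕ) (t : ℝ) : 0 < max ((1/((n:ℝ)+1))^2) (t^2) :=
  lt_max_of_lt_left (by positivity)

/-- the truncation of `a / q^2` -/
noncomputable def trunc (a q : MvPolynomial (Fin d) ℝ) (n : ℕ) :
    CompactlySupportedContinuousMap (Fin d → ℝ) ℝ where
  toFun x := cutoff d n x * (MvPolynomial.eval x a /
    max ((1/((n:ℝ)+1))^2) ((MvPolynomial.eval x q)^2))
  continuous_toFun := by
    apply (cutoff_cont n).mul
    apply (MvPolynomial.continuous_eval a).div
    · exact continuous_const.max ((MvPolynomial.continuous_eval q).pow 2)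
    · intro x; exact (den_pos n _).ne'
  hasCompactSupport' := (cutoff_supp n).mul_right

lemma trunc_apply (a q : MvPolynomial (Fin d) ℝ) (n : ℕ) (x : Fin d → ℝ) :
    trunc a q n x = cutoff d n x * (MvPolynomial.eval x a /
    max ((1/((n:ℝ)+1))^2) ((MvPolynomial.eval x q)^2)) := rfl

lemma norm_le_sq (x : Fin d → ℝ) : ‖x‖ ≤ 1 + ∑ i, (x i)^2 := by
  have h0 : 0 ≤ ∑ i, (x i)^2 := Finset.sum_nonneg fun i _ => sq_nonneg _
  rw [pi_norm_le_iff_of_nonneg (by linarith)]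
  intro i
  have := Finset.single_le_sum (f := fun i => (x i)^2) (fun i _ => sq_nonneg _) (Finset.mem_univ i)
  simp only [Real.norm_eq_abs] at *
  nlinarith [sq_abs (x i), sq_nonneg (|x i| - 1)]

/-- dominating numerator -/
noncomputable def dom (p q : MvPolynomial (Fin d) ℝ) : MvPolynomial (Fin d) ℝ :=
  (1 + ∑ i, (MvPolynomial.X i)^2) * ((1 + p^2) * (1 + q^2))

lemma eval_dom (p q : MvPolynomial (Fin d) ℝ) (x : Fin d → ℝ) :
    MvPolynomial.eval x (dom p q) = (1 + ∑ i, (x i)^2) *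
      ((1 + (MvPolynomial.eval x p)^2) * (1 + (MvPolynomial.eval x q)^2)) := by
  simp [dom]

lemma dom_pos (p q : MvPolynomial (Fin d) ℝ) (x : Fin d → ℝ) :
    0 < MvPolynomial.eval x (dom p q) := by
  have h0 : 0 ≤ ∑ i, (x i)^2 := Finset.sum_nonneg fun i _ => sq_nonneg _
  rw [eval_dom]; positivity

lemma le_dom (p q : MvPolynomial (Fin d) ℝ) (x : Fin d → ℝ) :
    |MvPolynomial.eval x p * MvPolynomial.eval x q| ≤ MvPolynomial.eval x (dom p q) := by
  have h0 : 0 ≤ ∑ i, (x i)^2 := Finset.sum_nonneg fun i _ => sq_nonneg _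
  rw [eval_dom, abs_mul]
  set P := MvPolynomial.eval x p
  set Q := MvPolynomial.eval x q
  have hP : |P| ≤ 1 + P^2 := by nlinarith [sq_abs P, sq_nonneg (|P| - 1)]
  have hQ : |Q| ≤ 1 + Q^2 := by nlinarith [sq_abs Q, sq_nonneg (|Q| - 1)]
  have h1 : |P| * |Q| ≤ (1 + P^2) * (1+Q^2) := by gcongr
  have : 0 ≤ (1 + P^2) * (1+Q^2) := by positivity
  nlinarith

lemma approx (p q : MvPolynomial (Fin d) ℝ) (n : ℕ) (x : Fin d → ℝ)
    (hq : MvPolynomial.eval x q ≠ 0) :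
    |MvPolynomial.eval x p * MvPolynomial.eval x q / (MvPolynomial.eval x q)^2 - trunc (p * q) q n x|
      ≤ 1/((n:ℝ)+1) * (MvPolynomial.eval x (dom p q) / (MvPolynomial.eval x q)^2) := by
  have hdom := dom_pos p q x
  have hle := le_dom p q x
  have hed := eval_dom p q x
  have hno := norm_le_sq x
  rw [trunc_apply, map_mul]
  set D := MvPolynomial.eval x (dom p q)
  set P := MvPolynomial.eval x p
  set Q := MvPolynomial.eval x q
  have h0 : 0 ≤ ∑ i, (x i)^2 := Finset.sum_nonneg fun i _ => sq_nonneg _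
  set s := ∑ i, (x i)^2
  set δ : ℝ := 1/((n:ℝ)+1) with hδ
  have hδ0 : 0 < δ := by positivity
  have hQ : 0 < Q^2 := by positivity
  have hc0 := cutoff_nonneg n x
  have hc1 := cutoff_le_one n x
  have hm : 0 < max (δ^2) (Q^2) := lt_max_of_lt_right hQ
  have hfac : P * Q / Q^2 - cutoff d n x * (P * Q / max (δ^2) (Q^2))
      = (1 - cutoff d n x * (Q^2 / max (δ^2) (Q^2))) * (P * Q / Q^2) := by
    field_simp
  have hr0 : 0 ≤ Q^2 / max (δ^2) (Q^2) := by positivity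
  have hr1 : Q^2 / max (δ^2) (Q^2) ≤ 1 := (div_le_one hm).2 (le_max_right _ _)
  by_cases hcase : ‖x‖ ≤ n + 1 ∧ δ ≤ |Q|
  · obtain ⟨h1, h2⟩ := hcase
    have : max (δ^2) (Q^2) = Q^2 := max_eq_right (by rw [← sq_abs Q]; gcongr)
    rw [hfac, cutoff_eq_one n x h1, this, div_self hQ.ne']
    simp only [mul_one, sub_self, zero_mul, abs_zero]
    positivity
  · have hb : |P * Q| ≤ δ * D := by
      rw [abs_mul]
      have hP : |P| ≤ 1 + P^2 := by nlinarith [sq_abs P, sq_nonneg (|P| - 1)]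
      have hQ' : |Q| ≤ 1 + Q^2 := by nlinarith [sq_abs Q, sq_nonneg (|Q| - 1)]
      rw [hed]
      by_cases hx : ‖x‖ ≤ n + 1
      · have hlt : |Q| ≤ δ := by
          by_contra h; exact hcase ⟨hx, by linarith⟩
        have : |P| * |Q| ≤ (1 + P^2) * δ := by gcongr
        have h2 : (1 + P^2) ≤ (1+s)*((1 + P^2) * (1+Q^2)) := by
          have : 0 ≤ P^2 := sq_nonneg _
          have h3 : (1 + P^2) ≤ (1 + P^2) * (1+Q^2) := by nlinarith
          nlinarith
        nlinarith
      · have h1 : |P| * |Q| ≤ (1 + P^2) * (1+Q^2) := by gcongr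
        have h2 : 1 ≤ δ * (1 + s) := by
          rw [hδ, div_mul_eq_mul_div, one_mul, le_div_iff₀ (by positivity)]
          linarith
        have : 0 ≤ (1 + P^2) * (1+Q^2) := by positivity
        nlinarith
    rw [hfac, abs_mul, abs_div, abs_of_pos hQ]
    have h3 : |1 - cutoff d n x * (Q^2 / max (δ^2) (Q^2))| ≤ 1 := by
      have := mul_nonneg hc0 hr0
      have := mul_le_one₀ hc1 hr0 hr1
      rw [abs_le]; constructor <;> linarith
    calc _ ≤ 1 * (|P * Q| / Q^2) := by gcongr
      _ ≤ 1 * ((δ * D) / Q^2) := by gcongr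
      _ = _ := by rw [one_mul, mul_div_assoc]

lemma trunc_le (a q : MvPolynomial (Fin d) ℝ) (n : ℕ) (x : Fin d → ℝ)
    (hq : MvPolynomial.eval x q ≠ 0) (ha : 0 ≤ MvPolynomial.eval x a) :
    trunc a q n x ≤ MvPolynomial.eval x a / (MvPolynomial.eval x q)^2 := by
  rw [trunc_apply]
  have hQ : 0 < (MvPolynomial.eval x q)^2 := by positivity
  calc _ ≤ 1 * (MvPolynomial.eval x a / (MvPolynomial.eval x q)^2) := by
        gcongr
        · exact cutoff_le_one n x
        · exact le_max_right _ _
    _ = _ := one_mul _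

lemma trunc_tendsto (a q : MvPolynomial (Fin d) ℝ) (x : Fin d → ℝ)
    (ha : 0 < MvPolynomial.eval x a) :
    Tendsto (fun n => ENNReal.ofReal (trunc a q n x)) atTop
      (𝓝 (ENNReal.ofReal (MvPolynomial.eval x a) / ENNReal.ofReal ((MvPolynomial.eval x q)^2))) := by
  have hev : ∀ᶠ n : ℕ in atTop, ENNReal.ofReal (MvPolynomial.eval x a) / 
      ENNReal.ofReal (max ((1/((n:ℝ)+1))^2) ((MvPolynomial.eval x q)^2)) = ENNReal.ofReal (trunc a q n x) := by
    filter_upwards [eventually_ge_atTop ⌈‖x‖⌉₊] with n hn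
    have : ‖x‖ ≤ n + 1 := by
      have := Nat.ceil_le.1 hn
      linarith
    rw [trunc_apply, cutoff_eq_one n x this, one_mul, ENNReal.ofReal_div_of_pos (den_pos _ _)]
  refine Tendsto.congr' hev ?_
  apply ENNReal.Tendsto.const_div
  · apply ENNReal.tendsto_ofReal
    have h1 : Tendsto (fun n : ℕ => (1/((n:ℝ)+1))^2) atTop (𝓝 0) := by
      simpa using (tendsto_one_div_add_atTop_nhds_zero_nat (𝕜 := ℝ)).pow 2
    have := h1.max (tendsto_const_nhds (x := (MvPolynomial.eval x q)^2))
    rwa [max_eq_right (sq_nonneg _)] at this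
  · right; exact ENNReal.ofReal_ne_top

end AuxPF

open MeasureTheory Filter Topology AuxPF in
/-- **Lemma 3.7.**  Let `𝔻` be a multiplicative set in `ℝ[x₁,…,x_d]` (with
`1 ∈ 𝔻`, `0 ∉ 𝔻`), `A = 𝔻⁻¹ℝ[x₁,…,x_d]`, and let `L` be a linear functional
on the ordered vector space `E = A ⊕ C_c(ℝ^d)` that is nonnegative on every
element `(p/q, φ)` with `p(x)/q(x) + φ(x) ≥ 0` off the zero set of `q`.  Then
`L` restricted to `A` is given by a positive Borel measure `μ` on `ℝ^d`
vanishing on the zero set of each `q ∈ 𝔻`. -/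
theorem positive_functional_on_A_plus_Cc {d : ℕ}
    (𝔻 : Submonoid (MvPolynomial (Fin d) ℝ)) (h𝔻 : (0 : MvPolynomial (Fin d) ℝ) ∉ 𝔻)
    (L : (Localization 𝔻 × CompactlySupportedContinuousMap (Fin d → ℝ) ℝ) →ₗ[ℝ] ℝ)
    (hL : ∀ (p : MvPolynomial (Fin d) ℝ) (q : MvPolynomial (Fin d) ℝ) (hq : q ∈ 𝔻)
        (φ : CompactlySupportedContinuousMap (Fin d → ℝ) ℝ),
      (∀ x : Fin d → ℝ, MvPolynomial.eval x q ≠ 0 →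
        0 ≤ MvPolynomial.eval x p / MvPolynomial.eval x q + φ x) →
      0 ≤ L (Localization.mk p ⟨q, hq⟩, φ)) :
    ∃ μ : MeasureTheory.Measure (Fin d → ℝ),
      (∀ q ∈ 𝔻, μ {x : Fin d → ℝ | MvPolynomial.eval x q = 0} = 0) ∧
      ∀ (p : MvPolynomial (Fin d) ℝ) (q : MvPolynomial (Fin d) ℝ) (hq : q ∈ 𝔻),
        MeasureTheory.Integrable
          (fun x : Fin d → ℝ => MvPolynomial.eval x p / MvPolynomial.eval x q) μ ∧
        L (Localization.mk p ⟨q, hq⟩, 0) =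
          ∫ x : Fin d → ℝ, MvPolynomial.eval x p / MvPolynomial.eval x q ∂μ := by
  classical
  let Λ : CompactlySupportedContinuousMap (Fin d → ℝ) ℝ →ₚ[ℝ] ℝ :=
    PositiveLinearMap.mk₀ (L.comp (LinearMap.inr ℝ _ _)) (by
      intro φ hφ
      have := hL 0 1 𝔻.one_mem φ (by
        intro x _
        simpa using hφ x)
      rw [Localization.mk_zero] at this
      exact this)
  have hΛ : ∀ φ, Λ φ = L (0, φ) := fun φ => rfl
  let μ := RealRMK.rieszMeasure Λ
  have hμ : ∀ φ : CompactlySupportedContinuousMap (Fin d → ℝ) ℝ, ∫ x, φ x ∂μ = L (0, φ) :=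
    fun φ => RealRMK.integral_rieszMeasure Λ φ
  have hint : ∀ φ : CompactlySupportedContinuousMap (Fin d → ℝ) ℝ, Integrable (fun x => φ x) μ :=
    fun φ => φ.continuous.integrable_of_hasCompactSupport φ.hasCompactSupport
  have hsplit : ∀ a φ, L (a, φ) = L (a, 0) + L (0, φ) := by
    intro a φ
    rw [← map_add]; simp
  -- the key bound
  have hlint : ∀ (p q : MvPolynomial (Fin d) ℝ) (hq : q ∈ 𝔻),
      ∫⁻ x, ENNReal.ofReal (MvPolynomial.eval x (dom p q)) /
        ENNReal.ofReal ((MvPolynomial.eval x q)^2) ∂μ ≠ ⊤ := by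
    intro p q hq
    have hb : ∀ n, ∫⁻ x, ENNReal.ofReal (trunc (dom p q) q n x) ∂μ
        ≤ ENNReal.ofReal (L (Localization.mk (dom p q) ⟨q * q, 𝔻.mul_mem hq hq⟩, 0)) := by
      intro n
      rw [← ofReal_integral_eq_lintegral_ofReal (hint _) (Eventually.of_forall fun x => ?_)]
      · apply ENNReal.ofReal_le_ofReal
        rw [hμ]
        have h := hL (dom p q) (q * q) (𝔻.mul_mem hq hq) (-(trunc (dom p q) q n)) (by
          intro x hx
          have hx' : MvPolynomial.eval x q ≠ 0 := by
            intro h; apply hx; simp [h]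
          have := trunc_le (dom p q) q n x hx' (dom_pos p q x).le
          rw [CompactlySupportedContinuousMap.neg_apply, map_mul, ← pow_two]
          linarith)
        rw [hsplit] at h
        have h2 : L (0, -(trunc (dom p q) q n)) = - L (0, trunc (dom p q) q n) := by
          rw [← map_neg]; simp
        linarith
      · show 0 ≤ trunc (dom p q) q n x
        rw [trunc_apply]
        exact mul_nonneg (cutoff_nonneg _ _) (div_nonneg (dom_pos p q x).le (den_pos _ _).le)
    refine ne_top_of_le_ne_top (b := ENNReal.ofReal _) ENNReal.ofReal_ne_top (?_ : _ ≤
      ENNReal.ofReal (L (Localization.mk (dom p q) ⟨q * q, 𝔻.mul_mem hq hq⟩, 0)))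
    calc _ = ∫⁻ x, liminf (fun n => ENNReal.ofReal (trunc (dom p q) q n x)) atTop ∂μ := by
          apply lintegral_congr
          intro x
          exact ((trunc_tendsto (dom p q) q x (dom_pos p q x)).liminf_eq).symm
      _ ≤ liminf (fun n => ∫⁻ x, ENNReal.ofReal (trunc (dom p q) q n x) ∂μ) atTop :=
          lintegral_liminf_le fun n =>
            ((trunc (dom p q) q n).continuous.measurable).ennreal_ofReal
      _ ≤ _ := by
          refine (liminf_le_liminf (Eventually.of_forall hb)).trans ?_
          simp
  have hmeas : ∀ p : MvPolynomial (Fin d) ℝ, Measurable fun x => MvPolynomial.eval x p :=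
    fun p => (MvPolynomial.continuous_eval p).measurable
  have hnull : ∀ q ∈ 𝔻, ∀ᵐ x ∂μ, MvPolynomial.eval x q ≠ 0 := by
    intro q hq
    have := ae_lt_top (((hmeas (dom 0 q)).ennreal_ofReal).div
      (((hmeas q).pow_const 2).ennreal_ofReal)) (hlint 0 q hq)
    filter_upwards [this] with x hx h0
    have hp := dom_pos 0 q x
    simp only [Pi.div_apply, h0] at hx
    rw [zero_pow two_ne_zero, ENNReal.ofReal_zero, ENNReal.div_zero] at hx
    · exact lt_irrefl _ hx
    · simpa using hp
  have hdomint : ∀ (p q : MvPolynomial (Fin d) ℝ) (hq : q ∈ 𝔻),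
      Integrable (fun x => MvPolynomial.eval x (dom p q) / (MvPolynomial.eval x q)^2) μ := by
    intro p q hq
    refine ⟨((hmeas _).div ((hmeas q).pow_const 2)).aestronglyMeasurable, ?_⟩
    rw [hasFiniteIntegral_iff_ofReal (Eventually.of_forall fun x =>
      div_nonneg (dom_pos p q x).le (sq_nonneg _))]
    refine lt_of_le_of_lt (le_of_eq (lintegral_congr_ae ?_)) (lt_top_iff_ne_top.2 (hlint p q hq))
    filter_upwards [hnull q hq] with x hx
    exact ENNReal.ofReal_div_of_pos (by positivity)
  refine ⟨μ, fun q hq => by simpa [ae_iff] using hnull q hq, ?_⟩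
  intro p q hq
  have hf : ∀ x : Fin d → ℝ, MvPolynomial.eval x p / MvPolynomial.eval x q =
      MvPolynomial.eval x p * MvPolynomial.eval x q / (MvPolynomial.eval x q)^2 := by
    intro x
    by_cases h : MvPolynomial.eval x q = 0
    · simp [h]
    · field_simp
  have hI : Integrable (fun x => MvPolynomial.eval x p / MvPolynomial.eval x q) μ := by
    refine (hdomint p q hq).mono' ((hmeas p).div (hmeas q)).aestronglyMeasurable
      (Eventually.of_forall fun x => ?_)
    rw [hf, Real.norm_eq_abs, abs_div, abs_of_nonneg (sq_nonneg (MvPolynomial.eval x q))]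
    exact div_le_div_of_nonneg_right (le_dom p q x) (sq_nonneg _)
  refine ⟨hI, ?_⟩
  set Q : 𝔻 := ⟨q * q, 𝔻.mul_mem hq hq⟩ with hQ
  have hmk : Localization.mk p ⟨q, hq⟩ = Localization.mk (p * q) Q := by
    rw [Localization.mk_eq_mk_iff, Localization.r_iff_exists]
    exact ⟨1, by simp only [hQ]; ring⟩
  have hlin : ∀ (c e : ℝ) (a b : MvPolynomial (Fin d) ℝ),
      L (Localization.mk (c • a + e • b) Q, 0) =
        c * L (Localization.mk a Q, 0) + e * L (Localization.mk b Q, 0) := by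
    intro c e a b
    rw [← Localization.add_mk_self, ← Localization.smul_mk, ← Localization.smul_mk,
      ← smul_eq_mul, ← smul_eq_mul, ← map_smul, ← map_smul, ← map_add]
    simp
  rw [hmk]
  set I := ∫ x, MvPolynomial.eval x p / MvPolynomial.eval x q ∂μ with hIdef
  set H := ∫ x, MvPolynomial.eval x (dom p q) / (MvPolynomial.eval x q)^2 ∂μ with hHdef
  set ℓ := L (Localization.mk (p * q) Q, 0) with hℓ
  set h := L (Localization.mk (dom p q) Q, 0) with hh
  have hbound : ∀ n : ℕ, |ℓ - I| ≤ 1/((n:ℝ)+1) * (h + H) := by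
    intro n
    set δ : ℝ := 1/((n:ℝ)+1) with hδ
    set φ := trunc (p * q) q n with hφ
    have hne : ∀ x, MvPolynomial.eval x (q * q) ≠ 0 → MvPolynomial.eval x q ≠ 0 := by
      intro x hx h
      apply hx; simp [h]
    have hneg : L (0, -φ) = - L (0, φ) := by
      rw [← map_neg]; simp
    have h1 := hL (δ • dom p q + (-1 : ℝ) • (p * q)) (q * q) (𝔻.mul_mem hq hq) φ (by
      intro x hx
      have := (abs_le.1 (approx p q n x (hne x hx))).2
      rw [map_add, MvPolynomial.smul_eval, MvPolynomial.smul_eval, map_mul, map_mul, ← pow_two,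
        add_div, mul_div_assoc, mul_div_assoc]
      linarith)
    have h2 := hL (δ • dom p q + (1 : ℝ) • (p * q)) (q * q) (𝔻.mul_mem hq hq) (-φ) (by
      intro x hx
      have := (abs_le.1 (approx p q n x (hne x hx))).1
      rw [map_add, MvPolynomial.smul_eval, MvPolynomial.smul_eval, map_mul, map_mul, ← pow_two,
        add_div, mul_div_assoc, mul_div_assoc, CompactlySupportedContinuousMap.neg_apply]
      linarith)
    rw [hsplit, hlin] at h1 h2
    rw [hneg] at h2
    have h3 : |I - L (0, φ)| ≤ δ * H := by
      rw [← hμ, hIdef, ← integral_sub hI (hint φ), hHdef, ← integral_const_mul, ← Real.norm_eq_abs]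
      apply norm_integral_le_of_norm_le ((hdomint p q hq).const_mul δ)
      filter_upwards [hnull q hq] with x hx
      rw [hf, Real.norm_eq_abs]
      exact approx p q n x hx
    rw [abs_le] at h3 ⊢
    constructor <;> nlinarith [h3.1, h3.2]
  have hlim : Tendsto (fun n : ℕ => 1/((n:ℝ)+1) * (h + H)) atTop (𝓝 0) := by
    simpa using (tendsto_one_div_add_atTop_nhds_zero_nat (𝕜 := ℝ)).mul_const (h + H)
  have := ge_of_tendsto' hlim hbound
  exact sub_eq_zero.1 (abs_eq_zero.1 (le_antisymm this (abs_nonneg _)))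
end

section
/- Let 𝔻 be a finitely generated multiplicative set in ℝ[x₁,…,x_d] such that 1 + x_j² ∈ 𝔻 for every j = 1,…,d, and let A := 𝔻⁻¹ℝ[x₁,…,x_d]. Then every linear functional L on A with L(a²) ≥ 0 for all a ∈ A admits a positive Borel measure μ on ℝ^d such that μ(Z(q)) = 0 for every q ∈ 𝔻 and, for all p ∈ ℝ[x₁,…,x_d] and q ∈ 𝔻, the function x ↦ p(x)/q(x) is μ-integrable and L(p/q) = ∫_{ℝ^d} p(x)/q(x) dμ(x). -/
set_option linter.unusedSectionVars false

open MeasureTheory Filter Topology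

namespace RatMP

section Abstract

variable {A : Type*} [CommRing A] [Algebra ℝ A]
variable {ι : Type*} [Fintype ι] [DecidableEq ι]

/-- The compact cube. -/
abbrev Cube (ι : Type*) := ι → unitInterval

lemma sumSq_nonneg (L : A →ₗ[ℝ] ℝ) (hL : ∀ a : A, 0 ≤ L (a ^ 2)) {s : A} (hs : IsSumSq s) :
    0 ≤ L s := by
  induction hs with
  | zero => simp
  | sq_add a hs ih =>
    rw [map_add, ← sq]
    exact add_nonneg (hL a) ih

lemma sumSq_pow {s : A} (hs : IsSumSq s) (n : ℕ) : IsSumSq (s ^ n) := by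
  induction n with
  | zero => simp
  | succ n ih => rw [pow_succ]; exact ih.mul hs

/-- One-variable Bernstein element. -/
noncomputable def bern (u : A) (k : ℕ) (j : ℕ) : A :=
  Polynomial.aeval u (bernsteinPolynomial ℝ k j)

lemma bern_sumSq {u : A} (h0 : IsSumSq u) (h1 : IsSumSq (1 - u)) (k j : ℕ) :
    IsSumSq (bern u k j) := by
  have : bern u k j = (k.choose j : A) * u ^ j * (1 - u) ^ (k - j) := by
    simp [bern, bernsteinPolynomial]
  rw [this]
  exact ((IsSumSq.natCast _).mul (sumSq_pow h0 _)).mul (sumSq_pow h1 _)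

lemma bern_sum (u : A) (k : ℕ) : ∑ j : Fin (k + 1), bern u k j = 1 := by
  have := congrArg (Polynomial.aeval u) (bernsteinPolynomial.sum ℝ k)
  rw [Finset.sum_range] at this
  simpa [bern] using this

lemma bern_variance (u : A) (k : ℕ) :
    ∑ j : Fin (k + 1), ((k : A) * u - ((j : ℕ) : A)) ^ 2 * bern u k j = (k : A) * (u * (1 - u)) := by
  have := congrArg (Polynomial.aeval u) (bernsteinPolynomial.variance ℝ k)
  rw [Finset.sum_range] at this
  simpa [bern, mul_assoc] using this

/-- Multivariate Bernstein element. -/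
noncomputable def basis (u : ι → A) (k : ℕ) (ν : ι → Fin (k + 1)) : A :=
  ∏ i, bern (u i) k (ν i)

lemma basis_sumSq {u : ι → A} (h0 : ∀ i, IsSumSq (u i)) (h1 : ∀ i, IsSumSq (1 - u i)) (k : ℕ)
    (ν : ι → Fin (k + 1)) : IsSumSq (basis u k ν) :=
  IsSumSq.prod fun i _ => bern_sumSq (h0 i) (h1 i) _ _

lemma basis_sum (u : ι → A) (k : ℕ) : ∑ ν : ι → Fin (k + 1), basis u k ν = 1 := by
  have := Finset.prod_univ_sum (fun _ : ι => (Finset.univ : Finset (Fin (k + 1))))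
    (fun i j => bern (u i) k j)
  simp only [bern_sum, Finset.prod_const_one, Fintype.piFinset_univ] at this
  exact this.symm

lemma basis_variance (u : ι → A) (k : ℕ) (i : ι) :
    ∑ ν : ι → Fin (k + 1), ((k : A) * u i - ((ν i : ℕ) : A)) ^ 2 * basis u k ν
      = (k : A) * (u i * (1 - u i)) := by
  have := Finset.prod_univ_sum (fun _ : ι => (Finset.univ : Finset (Fin (k + 1))))
    (fun i' j => (if i' = i then ((k : A) * u i - ((j : ℕ) : A)) ^ 2 else 1) * bern (u i') k j)
  simp only [Finset.prod_mul_distrib, Fintype.piFinset_univ, Finset.prod_ite_eq', 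
    Finset.mem_univ, if_true] at this
  unfold basis
  rw [← this, ← bern_variance, Finset.prod_eq_single i]
  · simp
  · intro b _ hb
    simp [hb, bern_sum]
  · simp

/-- grid point -/
noncomputable def gridPt {k : ℕ} (ν : ι → Fin (k + 1)) : Cube ι := fun i => bernstein.z (ν i)

/-- discretised functional -/
noncomputable def Mk (L : A →ₗ[ℝ] ℝ) (u : ι → A) (k : ℕ) (f : C(Cube ι, ℝ)) (a : A) : ℝ :=
  ∑ ν : ι → Fin (k + 1), f (gridPt ν) * L (a * basis u k ν)

/-- Coordinate function. -/
noncomputable def coord (i : ι) : C(Cube ι, ℝ) := ⟨fun v => (v i : ℝ), by fun_prop⟩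

section
variable (L : A →ₗ[ℝ] ℝ) (hL : ∀ a : A, 0 ≤ L (a ^ 2)) (u : ι → A)
  (h0 : ∀ i, IsSumSq (u i)) (h1 : ∀ i, IsSumSq (1 - u i))

lemma Mk_add_left (k : ℕ) (f g : C(Cube ι, ℝ)) (a : A) :
    Mk L u k (f + g) a = Mk L u k f a + Mk L u k g a := by
  simp [Mk, add_mul, Finset.sum_add_distrib]

lemma Mk_smul_left (k : ℕ) (r : ℝ) (f : C(Cube ι, ℝ)) (a : A) :
    Mk L u k (r • f) a = r * Mk L u k f a := by
  simp [Mk, Finset.mul_sum, mul_assoc]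

lemma Mk_add_right (k : ℕ) (f : C(Cube ι, ℝ)) (a b : A) :
    Mk L u k f (a + b) = Mk L u k f a + Mk L u k f b := by
  simp [Mk, add_mul, mul_add, Finset.sum_add_distrib]

lemma Mk_smul_right (k : ℕ) (r : ℝ) (f : C(Cube ι, ℝ)) (a : A) :
    Mk L u k f (r • a) = r * Mk L u k f a := by
  simp only [Mk, Finset.mul_sum, smul_mul_assoc, map_smul, smul_eq_mul]
  exact Finset.sum_congr rfl fun _ _ => by ring

lemma Mk_one (k : ℕ) (a : A) : Mk L u k 1 a = L a := by
  simp only [Mk, ContinuousMap.one_apply, one_mul]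
  rw [← map_sum, ← Finset.mul_sum, basis_sum, mul_one]

include hL h0 h1 in
lemma Mk_nonneg (k : ℕ) {f : C(Cube ι, ℝ)} (hf : ∀ v, 0 ≤ f v) {a : A} (ha : IsSumSq a) :
    0 ≤ Mk L u k f a :=
  Finset.sum_nonneg fun ν _ =>
    mul_nonneg (hf _) (sumSq_nonneg L hL (ha.mul (basis_sumSq h0 h1 k ν)))

include hL h0 h1 in
lemma Mk_bound_sq (k : ℕ) (f : C(Cube ι, ℝ)) {a : A} (ha : IsSumSq a) :
    |Mk L u k f a| ≤ ‖f‖ * L a := by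
  have h : ∀ g : C(Cube ι, ℝ), ‖g‖ = ‖f‖ → Mk L u k g a ≤ ‖f‖ * L a := by
    intro g hg
    have := Mk_nonneg L hL u h0 h1 k (f := ‖f‖ • (1 : C(Cube ι, ℝ)) + (-1 : ℝ) • g) (fun v => by
      have := (le_abs_self _).trans (g.norm_coe_le_norm v)
      simp; linarith) ha
    rw [Mk_add_left, Mk_smul_left, Mk_smul_left, Mk_one] at this
    linarith
  rw [abs_le]
  refine ⟨?_, h f rfl⟩
  have := h ((-1 : ℝ) • f) (by simp)
  rw [Mk_smul_left] at this
  linarith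

include hL h0 h1 in
lemma Mk_bound (f : C(Cube ι, ℝ)) (a : A) : ∃ C, ∀ k, |Mk L u k f a| ≤ C := by
  refine ⟨‖f‖ * L ((a + 1) * (a + 1)) + ‖f‖ * L (a * a) + ‖f‖ * L 1, fun k => ?_⟩
  have e : Mk L u k f ((a + 1) * (a + 1)) = 2 * Mk L u k f a + Mk L u k f (a * a)
      + Mk L u k f 1 := by
    rw [← Mk_smul_right, ← Mk_add_right, ← Mk_add_right]
    congr 1
    rw [ofNat_smul_eq_nsmul, two_nsmul]
    ring
  have b1 := abs_le.1 (Mk_bound_sq L hL u h0 h1 k f (IsSumSq.mul_self (a + 1)))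
  have b2 := abs_le.1 (Mk_bound_sq L hL u h0 h1 k f (IsSumSq.mul_self a))
  have b3 := abs_le.1 (Mk_bound_sq L hL u h0 h1 k f (IsSumSq.one))
  have := (b1.1.trans b1.2)
  have := (b2.1.trans b2.2)
  have := (b3.1.trans b3.2)
  rw [abs_le]; constructor <;> linarith

include hL h0 h1 in
/-- key estimate -/
lemma Mk_coord (k : ℕ) (hk : 0 < k) (f : C(Cube ι, ℝ)) (a : A) (i : ι) (m : ℕ) :
    2 * m * |Mk L u k (f * coord i) a - Mk L u k f (u i * a)| ≤
      m ^ 2 * (L (u i * (1 - u i)) / k) + ‖f * f‖ * L (a * a) := by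
  have hk' : (k : ℝ) ≠ 0 := by positivity
  have hz : ∀ ν : ι → Fin (k + 1), coord i (gridPt ν) = ((ν i : ℕ) : ℝ) / k := fun ν => rfl
  have hvar : ∑ ν : ι → Fin (k + 1), L ((u i - algebraMap ℝ A (((ν i : ℕ) : ℝ) / k)) ^ 2
      * basis u k ν) = L (u i * (1 - u i)) / k := by
    have h := congrArg L (basis_variance u k i)
    have e : ∀ ν : ι → Fin (k + 1), ((k : A) * u i - ((ν i : ℕ) : A)) ^ 2 * basis u k ν =
        ((k : ℝ) ^ 2) • ((u i - algebraMap ℝ A (((ν i : ℕ) : ℝ) / k)) ^ 2 * basis u k ν) := by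
      intro ν
      have e1 : ((ν i : ℕ) : A) = (k : A) * algebraMap ℝ A (((ν i : ℕ) : ℝ) / k) := by
        rw [← map_natCast (algebraMap ℝ A), ← map_natCast (algebraMap ℝ A), ← map_mul]
        congr 1
        field_simp
      rw [e1, Algebra.smul_def]
      simp only [map_pow, map_natCast]
      ring
    simp only [e] at h
    rw [map_sum] at h
    simp only [map_smul, smul_eq_mul] at h
    rw [← Finset.mul_sum, show (k : A) * (u i * (1 - u i)) = (k : ℝ) • (u i * (1 - u i)) by
      rw [Algebra.smul_def, map_natCast], map_smul, smul_eq_mul] at h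
    rw [eq_div_iff hk']
    have : (k : ℝ) * ((∑ ν : ι → Fin (k + 1), L ((u i - algebraMap ℝ A (((ν i : ℕ) : ℝ) / k)) ^ 2
      * basis u k ν)) * k) = k * L (u i * (1 - u i)) := by rw [← h]; ring
    exact mul_left_cancel₀ hk' this
  have hff := Mk_bound_sq L hL u h0 h1 k (f * f) (IsSumSq.mul_self a)
  have hD : ∀ ε : ℝ, ε ^ 2 = 1 → 0 ≤ m ^ 2 * (L (u i * (1 - u i)) / k)
      + 2 * m * ε * (Mk L u k (f * coord i) a - Mk L u k f (u i * a)) 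
      + Mk L u k (f * f) (a * a) := by
    intro ε hε
    have key : 0 ≤ ∑ ν : ι → Fin (k + 1), L (((algebraMap ℝ A (m * ε)) * 
        (u i - algebraMap ℝ A (((ν i : ℕ) : ℝ) / k)) - algebraMap ℝ A (f (gridPt ν)) * a) ^ 2
        * basis u k ν) :=
      Finset.sum_nonneg fun ν _ => sumSq_nonneg L hL
        ((by rw [sq]; exact IsSumSq.mul_self _ : IsSumSq _).mul (basis_sumSq h0 h1 k ν))
    refine key.trans_eq ?_
    rw [← hvar, Mk, Mk, Mk, ← Finset.sum_sub_distrib, Finset.mul_sum, Finset.mul_sum,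
      ← Finset.sum_add_distrib, ← Finset.sum_add_distrib]
    refine Finset.sum_congr rfl fun ν _ => ?_
    simp only [ContinuousMap.mul_apply, hz]
    generalize ((ν i : ℕ) : ℝ) / k = z
    generalize f (gridPt ν) = y
    generalize basis u k ν = b
    have : ((algebraMap ℝ A (m * ε)) * (u i - algebraMap ℝ A z) - algebraMap ℝ A y * a) ^ 2 * b
      = ((m : ℝ) ^ 2 * ε ^ 2) • ((u i - algebraMap ℝ A z) ^ 2 * b)
        + (2 * m * ε * (y * z)) • (a * b) + (- (2 * m * ε * y)) • (u i * a * b)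
        + (y * y) • (a * a * b) := by
      simp only [Algebra.smul_def, map_mul, map_pow, map_neg, map_ofNat]
      ring
    rw [this, hε]
    simp only [map_add, map_smul, smul_eq_mul]
    ring
  have p1 := hD 1 (by norm_num)
  have p2 := hD (-1) (by norm_num)
  have hff' := (abs_le.1 hff).2
  rcases abs_cases (Mk L u k (f * coord i) a - Mk L u k f (u i * a)) with ⟨h, _⟩ | ⟨h, _⟩ <;>
    rw [h] <;> linarith

include hL h0 h1 in
lemma exists_M : ∃ M : C(Cube ι, ℝ) → A → ℝ,
    (∀ f g a, M (f + g) a = M f a + M g a) ∧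
    (∀ (r : ℝ) f a, M (r • f) a = r * M f a) ∧
    (∀ f a b, M f (a + b) = M f a + M f b) ∧
    (∀ (r : ℝ) f a, M f (r • a) = r * M f a) ∧
    (∀ f a, (∀ v, 0 ≤ f v) → IsSumSq a → 0 ≤ M f a) ∧
    (∀ a, M 1 a = L a) ∧
    (∀ f a i, M (f * coord i) a = M f (u i * a)) := by
  let U : Ultrafilter ℕ := hyperfilter ℕ
  have hU : (U : Filter ℕ) ≤ atTop := by
    rw [← Nat.cofinite_eq_atTop]; exact hyperfilter_le_cofinite
  have hlim : ∀ (f : C(Cube ι, ℝ)) (a : A), ∃ x, Tendsto (fun k => Mk L u k f a) U (𝓝 x) := by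
    intro f a
    obtain ⟨C, hC⟩ := Mk_bound L hL u h0 h1 f a
    obtain ⟨x, _, hx⟩ := (isCompact_Icc (a := -C) (b := C)).ultrafilter_le_nhds
      (U.map fun k => Mk L u k f a) (by
        rw [le_principal_iff]
        exact Filter.mem_map.2 (Filter.mem_of_superset univ_mem (fun k _ => abs_le.1 (hC k))))
    exact ⟨x, hx⟩
  choose M hM using hlim
  refine ⟨M, ?_, ?_, ?_, ?_, ?_, ?_, ?_⟩
  · intro f g a
    refine tendsto_nhds_unique (hM _ _) ?_
    simpa only [Mk_add_left] using (hM f a).add (hM g a)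
  · intro r f a
    refine tendsto_nhds_unique (hM _ _) ?_
    simpa only [Mk_smul_left] using (hM f a).const_mul r
  · intro f a b
    refine tendsto_nhds_unique (hM _ _) ?_
    simpa only [Mk_add_right] using (hM f a).add (hM f b)
  · intro r f a
    refine tendsto_nhds_unique (hM _ _) ?_
    simpa only [Mk_smul_right] using (hM f a).const_mul r
  · intro f a hf ha
    exact ge_of_tendsto' (hM f a) fun k => Mk_nonneg L hL u h0 h1 k hf ha
  · intro a
    refine tendsto_nhds_unique (hM _ _) ?_
    simp only [Mk_one]
    exact tendsto_const_nhds
  · intro f a i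
    have hb : ∀ m : ℕ, 2 * m * |M (f * coord i) a - M f (u i * a)| ≤ ‖f * f‖ * L (a * a) := by
      intro m
      have t1 : Tendsto (fun k : ℕ => (m : ℝ) ^ 2 * (L (u i * (1 - u i)) / k)
          + ‖f * f‖ * L (a * a)) U (𝓝 (m ^ 2 * 0 + ‖f * f‖ * L (a * a))) :=
        (((tendsto_const_div_atTop_nhds_zero_nat _).mono_left hU).const_mul _).add_const _
      have t2 := (((hM (f * coord i) a).sub (hM f (u i * a))).abs).const_mul (2 * (m : ℝ))
      rw [mul_zero, zero_add] at t1
      exact le_of_tendsto_of_tendsto t2 t1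
        (hU (eventually_atTop.2 ⟨1, fun k hk => Mk_coord L hL u h0 h1 k hk f a i m⟩))
    by_contra hne
    have hpos : 0 < |M (f * coord i) a - M f (u i * a)| := abs_pos.2 (sub_ne_zero.2 hne)
    obtain ⟨m, hm⟩ := exists_nat_gt (‖f * f‖ * L (a * a) / |M (f * coord i) a - M f (u i * a)|)
    rw [div_lt_iff₀ hpos] at hm
    have := hb m
    nlinarith [mul_nonneg (Nat.cast_nonneg (α := ℝ) m) hpos.le]


lemma exists_measure (Λ : C(Cube ι, ℝ) → ℝ) (hadd : ∀ f g, Λ (f + g) = Λ f + Λ g)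
    (hsmul : ∀ (r : ℝ) f, Λ (r • f) = r * Λ f) (hpos : ∀ f, (∀ v, 0 ≤ f v) → 0 ≤ Λ f) :
    ∃ ν : Measure (Cube ι), IsFiniteMeasure ν ∧ ∀ f : C(Cube ι, ℝ), ∫ v, f v ∂ν = Λ f := by
  let Λ' : CompactlySupportedContinuousMap (Cube ι) ℝ →ₚ[ℝ] ℝ := PositiveLinearMap.mk₀
    { toFun := fun f => Λ f.toContinuousMap
      map_add' := fun f g => hadd _ _
      map_smul' := fun r f => hsmul _ _ } (fun f hf => hpos _ hf)
  refine ⟨RealRMK.rieszMeasure Λ', inferInstance, fun f => ?_⟩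
  exact RealRMK.integral_rieszMeasure Λ' (CompactlySupportedContinuousMap.continuousMapEquiv f)

/-- Polynomial function on the cube. -/
noncomputable def pol (P : MvPolynomial ι ℝ) : C(Cube ι, ℝ) := MvPolynomial.aeval coord P

/-- `g` represents the element `r`. -/
def Good (r : A) (g : Cube ι → ℝ) : Prop :=
  ∃ P W : MvPolynomial ι ℝ, IsUnit (MvPolynomial.aeval u W) ∧
    MvPolynomial.aeval u P = r * MvPolynomial.aeval u W ∧
    ∀ v, pol W v ≠ 0 → pol P v = g v * pol W v

variable {u} in
lemma Good.add {r s : A} {g h : Cube ι → ℝ} (hr : Good u r g) (hs : Good u s h) :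
    Good u (r + s) (fun v => g v + h v) := by
  obtain ⟨P, W, h1, h2, h3⟩ := hr
  obtain ⟨P', W', h1', h2', h3'⟩ := hs
  refine ⟨P * W' + P' * W, W * W', ?_, ?_, ?_⟩
  · rw [map_mul]; exact h1.mul h1'
  · simp only [map_add, map_mul, h2, h2']; ring
  · intro v hv
    simp only [pol, map_add, map_mul, ContinuousMap.add_apply, ContinuousMap.mul_apply] at *
    rw [h3 v (left_ne_zero_of_mul hv), h3' v (right_ne_zero_of_mul hv)]; ring

variable {u} in
lemma Good.mul {r s : A} {g h : Cube ι → ℝ} (hr : Good u r g) (hs : Good u s h) :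
    Good u (r * s) (fun v => g v * h v) := by
  obtain ⟨P, W, h1, h2, h3⟩ := hr
  obtain ⟨P', W', h1', h2', h3'⟩ := hs
  refine ⟨P * P', W * W', ?_, ?_, ?_⟩
  · rw [map_mul]; exact h1.mul h1'
  · simp only [map_mul, h2, h2']; ring
  · intro v hv
    simp only [pol, map_mul, ContinuousMap.mul_apply] at *
    rw [h3 v (left_ne_zero_of_mul hv), h3' v (right_ne_zero_of_mul hv)]; ring

variable {u} in
lemma Good.const (c : ℝ) : Good u (algebraMap ℝ A c) (fun _ => c) :=
  ⟨MvPolynomial.C c, 1, by simp, by simp, fun v _ => by simp [pol]⟩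

variable {u} in
lemma Good.inv {r s : A} (hrs : r * s = 1) {g : Cube ι → ℝ} (hr : Good u r g) :
    Good u s (fun v => (g v)⁻¹) := by
  obtain ⟨P, W, h1, h2, h3⟩ := hr
  refine ⟨W * W, P * W, ?_, ?_, ?_⟩
  · rw [map_mul, h2]
    exact ((IsUnit.of_mul_eq_one _ hrs).mul h1).mul h1
  · simp only [map_mul, h2]
    linear_combination (-(MvPolynomial.aeval u W) ^ 2) * hrs
  · intro v hv
    simp only [pol, map_mul, ContinuousMap.mul_apply] at *
    have hP := left_ne_zero_of_mul hv
    rw [h3 v (right_ne_zero_of_mul hv)] at hP ⊢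
    have := left_ne_zero_of_mul hP
    field_simp

include hL h0 h1 in
lemma exists_rep : ∃ ν : Measure (Cube ι), IsFiniteMeasure ν ∧
    (∀ r g, Good u r g → Integrable g ν ∧ L r = ∫ v, g v ∂ν) ∧
    (∀ r g, IsUnit r → Good u r g → ∀ᵐ v ∂ν, g v ≠ 0) := by
  obtain ⟨M, Madd, Msmul, Madd', Msmul', Mpos, Mone, Mcoord⟩ := exists_M L hL u h0 h1
  have Mpol : ∀ (P : MvPolynomial ι ℝ) f a, M (f * pol P) a = M f (MvPolynomial.aeval u P * a) := by
    intro P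
    induction P using MvPolynomial.induction_on with
    | C c =>
      intro f a
      have e1 : f * pol (MvPolynomial.C c) = c • f := by
        ext v; simp [pol, mul_comm]
      rw [e1, Msmul, MvPolynomial.aeval_C, ← Algebra.smul_def, Msmul']
    | add p q hp hq =>
      intro f a
      have e1 : f * pol (p + q) = f * pol p + f * pol q := by
        simp [pol, mul_add]
      rw [e1, Madd, hp, hq, map_add, add_mul, Madd']
    | mul_X p i hp =>
      intro f a
      have e1 : f * pol (p * MvPolynomial.X i) = (f * pol p) * coord i := by
        simp [pol, mul_assoc]
      rw [e1, Mcoord, hp, map_mul, MvPolynomial.aeval_X, mul_assoc]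
  have hex : ∀ c : A, ∃ ν : Measure (Cube ι), IsFiniteMeasure ν ∧
      ∀ f : C(Cube ι, ℝ), ∫ v, f v ∂ν = M f (c * c) := fun c =>
    exists_measure (fun f => M f (c * c)) (fun f g => Madd f g _) (fun r f => Msmul r f _)
      (fun f hf => Mpos f _ hf (IsSumSq.mul_self c))
  obtain ⟨ν, hν, hνM⟩ := hex 1
  -- change of measure
  have hcm : ∀ W : MvPolynomial ι ℝ, IsUnit (MvPolynomial.aeval u W) →
      ∃ (σ : A) (ν' : Measure (Cube ι)), IsFiniteMeasure ν' ∧ MvPolynomial.aeval u W * σ = 1 ∧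
        (∀ f : C(Cube ι, ℝ), ∫ v, f v ∂ν' = M f (σ * σ)) ∧
        ν = ν'.withDensity (fun v => ENNReal.ofReal (pol W v * pol W v)) := by
    intro W hW
    obtain ⟨σ, hσ⟩ := hW.exists_right_inv
    obtain ⟨ν', hν', hν'M⟩ := hex σ
    refine ⟨σ, ν', hν', hσ, hν'M, ?_⟩
    have hc : Continuous (fun v => pol W v * pol W v) := by fun_prop
    have hi : ∀ f : C(Cube ι, ℝ), Integrable (fun v => f v) ν' := fun f =>
      f.continuous.integrable_of_hasCompactSupport (HasCompactSupport.of_compactSpace _)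
    have : IsFiniteMeasure (ν'.withDensity (fun v => ENNReal.ofReal (pol W v * pol W v))) :=
      isFiniteMeasure_withDensity_ofReal (hi (pol W * pol W)).2
    refine ext_of_forall_integral_eq_of_IsFiniteMeasure fun f => ?_
    rw [integral_withDensity_eq_integral_toReal_smul (by fun_prop)
      (Eventually.of_forall fun v => ENNReal.ofReal_lt_top)]
    have e1 := hνM f.toContinuousMap
    have e2 := hν'M (f.toContinuousMap * pol (W * W))
    rw [Mpol] at e2
    have e3 : MvPolynomial.aeval u (W * W) * (σ * σ) = 1 * 1 := by
      rw [map_mul]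
      linear_combination (MvPolynomial.aeval u W * σ + 1) * hσ
    rw [e3, ← e1] at e2
    refine Eq.trans (Eq.symm e2) ?_
    refine integral_congr_ae (Eventually.of_forall fun v => ?_)
    simp only [ContinuousMap.mul_apply, pol, map_mul, smul_eq_mul]
    rw [ENNReal.toReal_ofReal (mul_self_nonneg _)]
    exact mul_comm _ _
  have hne : ∀ W : MvPolynomial ι ℝ, IsUnit (MvPolynomial.aeval u W) → ∀ᵐ v ∂ν, pol W v ≠ 0 := by
    intro W hW
    obtain ⟨σ, ν', hν', hσ, hν'M, rfl⟩ := hcm W hW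
    rw [ae_withDensity_iff (by fun_prop)]
    refine Eventually.of_forall fun v hv h => hv ?_
    simp [h]
  refine ⟨ν, hν, ?_, ?_⟩
  · rintro r g ⟨P, W, hW, hP, hg⟩
    obtain ⟨σ, ν', hν', hσ, hν'M, hνν'⟩ := hcm W hW
    have hi : ∀ f : C(Cube ι, ℝ), Integrable (fun v => f v) ν' := fun f =>
      f.continuous.integrable_of_hasCompactSupport (HasCompactSupport.of_compactSpace _)
    have ept : ∀ v, (ENNReal.ofReal (pol W v * pol W v)).toReal • g v = (pol (P * W)) v := by
      intro v
      rw [ENNReal.toReal_ofReal (mul_self_nonneg _), smul_eq_mul]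
      by_cases h : pol W v = 0
      · have : pol (P * W) v = pol P v * pol W v := by simp [pol]
        rw [this, h]; ring
      · have : pol (P * W) v = pol P v * pol W v := by simp [pol]
        rw [this, hg v h]; ring
    constructor
    · rw [hνν', integrable_withDensity_iff_integrable_smul' (by fun_prop)
        (Eventually.of_forall fun v => ENNReal.ofReal_lt_top)]
      simp only [ept]
      exact hi _
    · rw [hνν', integral_withDensity_eq_integral_toReal_smul (by fun_prop)
        (Eventually.of_forall fun v => ENNReal.ofReal_lt_top)]
      simp only [ept]
      rw [hν'M, ← one_mul (pol (P * W)), Mpol, Mone]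
      congr 1
      rw [map_mul, hP]
      linear_combination (-r * (MvPolynomial.aeval u W * σ + 1)) * hσ
  · rintro r g hr ⟨P, W, hW, hP, hg⟩
    have := hne (P * W) (by rw [map_mul, hP]; exact (hr.mul hW).mul hW)
    filter_upwards [this] with v hv hgv
    have e : pol (P * W) v = pol P v * pol W v := by simp [pol]
    rw [e] at hv
    apply hv
    rw [hg v (right_ne_zero_of_mul hv), hgv]; ring

end
end Abstract


/-- The coordinates on the cube mapped back to `ℝ^d`. -/
noncomputable def back {d : ℕ} (v : Cube (Fin d ⊕ Fin d)) : Fin d → ℝ :=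
  fun j => ((v (Sum.inr j) : ℝ) - 1 / 2) * (v (Sum.inl j) : ℝ)⁻¹

lemma measurable_back {d : ℕ} : Measurable (back (d := d)) := by
  unfold back
  fun_prop

end RatMP

open RatMP

/-- **Example 3.9.**  Let `𝔻` be a finitely generated multiplicative set in
`ℝ[x₁,…,x_d]` (with `1 ∈ 𝔻`, `0 ∉ 𝔻`) containing the polynomials `1 + x_j²`
for all `j = 1,…,d`.  Then every linear functional on `A = 𝔻⁻¹ℝ[x₁,…,x_d]`
that is nonnegative on squares is given by a positive Borel measure on `ℝ^d`
vanishing on the zero set of each `q ∈ 𝔻`. -/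
theorem rational_mp_denominators_all_coordinates {d : ℕ}
    (𝔻 : Submonoid (MvPolynomial (Fin d) ℝ)) (h𝔻0 : (0 : MvPolynomial (Fin d) ℝ) ∉ 𝔻)
    (h𝔻fg : 𝔻.FG)
    (hq : ∀ j : Fin d, (1 + MvPolynomial.X j ^ 2 : MvPolynomial (Fin d) ℝ) ∈ 𝔻)
    (L : Localization 𝔻 →ₗ[ℝ] ℝ) (hL : ∀ a : Localization 𝔻, 0 ≤ L (a ^ 2)) :
    ∃ μ : MeasureTheory.Measure (Fin d → ℝ),
      (∀ q ∈ 𝔻, μ {x : Fin d → ℝ | MvPolynomial.eval x q = 0} = 0) ∧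
      ∀ (p : MvPolynomial (Fin d) ℝ) (q : MvPolynomial (Fin d) ℝ) (hq' : q ∈ 𝔻),
        MeasureTheory.Integrable
          (fun x : Fin d → ℝ => MvPolynomial.eval x p / MvPolynomial.eval x q) μ ∧
        L (Localization.mk p ⟨q, hq'⟩) =
          ∫ x : Fin d → ℝ, MvPolynomial.eval x p / MvPolynomial.eval x q ∂μ := by
  classical
  let A := Localization 𝔻
  let φ : MvPolynomial (Fin d) ℝ →ₐ[ℝ] A := Algebra.algHom ℝ _ _
  have hφ : ∀ p, φ p = algebraMap (MvPolynomial (Fin d) ℝ) A p := fun p => rfl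
  have hunit : ∀ q ∈ 𝔻, IsUnit (φ q) := fun q hq => IsLocalization.map_units A ⟨q, hq⟩
  have hx : ∀ j : Fin d, ∃ y : A, (1 + φ (MvPolynomial.X j) ^ 2) * y = 1 := by
    intro j
    have := hunit _ (hq j)
    simp only [map_add, map_one, map_pow] at this
    exact this.exists_right_inv
  choose y hy using hx
  let half : A := algebraMap ℝ A (1 / 2)
  have hhalf : 2 * half = 1 := by
    rw [← map_ofNat (algebraMap ℝ A) 2, ← map_mul]; norm_num
  have hsq : ∀ a : A, IsSumSq (a ^ 2) := fun a => by rw [sq]; exact IsSumSq.mul_self a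
  let u : Fin d ⊕ Fin d → A := Sum.elim y (fun j => half + φ (MvPolynomial.X j) * y j)
  have h0 : ∀ i, IsSumSq (u i) := by
    rintro (j | j)
    · have : u (Sum.inl j) = y j ^ 2 + (φ (MvPolynomial.X j) * y j) ^ 2 := by
        change y j = _
        linear_combination (-y j) * hy j
      rw [this]; exact (hsq _).add (hsq _)
    · have : u (Sum.inr j) = 2 * ((half * (1 + φ (MvPolynomial.X j))) ^ 2 *
          (y j ^ 2 + (φ (MvPolynomial.X j) * y j) ^ 2)) := by
        change half + φ (MvPolynomial.X j) * y j = _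
        have e : y j ^ 2 + (φ (MvPolynomial.X j) * y j) ^ 2 = y j := by
          linear_combination (y j) * hy j
        rw [e]
        linear_combination (-half) * hy j - (half * y j * (1 + φ (MvPolynomial.X j)) ^ 2 + φ (MvPolynomial.X j) * y j) * hhalf
      rw [this]
      exact (by simpa using IsSumSq.natCast (R := A) 2 : IsSumSq (2 : A)).mul
        ((hsq _).mul ((hsq _).add (hsq _)))
  have h1 : ∀ i, IsSumSq (1 - u i) := by
    rintro (j | j)
    · have : 1 - u (Sum.inl j) = (φ (MvPolynomial.X j)) ^ 2 *
          (y j ^ 2 + (φ (MvPolynomial.X j) * y j) ^ 2) := by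
        change 1 - y j = _
        have e : y j ^ 2 + (φ (MvPolynomial.X j) * y j) ^ 2 = y j := by
          linear_combination (y j) * hy j
        rw [e]
        linear_combination - hy j
      rw [this]; exact (hsq _).mul ((hsq _).add (hsq _))
    · have : 1 - u (Sum.inr j) = 2 * ((half * (1 - φ (MvPolynomial.X j))) ^ 2 *
          (y j ^ 2 + (φ (MvPolynomial.X j) * y j) ^ 2)) := by
        change 1 - (half + φ (MvPolynomial.X j) * y j) = _
        have e : y j ^ 2 + (φ (MvPolynomial.X j) * y j) ^ 2 = y j := by
          linear_combination (y j) * hy j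
        rw [e]
        linear_combination (-half) * hy j - (half * y j * (1 - φ (MvPolynomial.X j)) ^ 2 - φ (MvPolynomial.X j) * y j + 1) * hhalf
      rw [this]
      exact (by simpa using IsSumSq.natCast (R := A) 2 : IsSumSq (2 : A)).mul
        ((hsq _).mul ((hsq _).add (hsq _)))
  obtain ⟨ν, hν, hrep, hne⟩ := exists_rep L hL u h0 h1
  have gX : ∀ j, Good u (φ (MvPolynomial.X j)) (fun v => back v j) := by
    intro j
    refine ⟨MvPolynomial.X (Sum.inr j) - MvPolynomial.C (1 / 2), MvPolynomial.X (Sum.inl j),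
      ?_, ?_, ?_⟩
    · rw [MvPolynomial.aeval_X]
      exact IsUnit.of_mul_eq_one _ ((mul_comm _ _).trans (hy j))
    · rw [map_sub, MvPolynomial.aeval_X, MvPolynomial.aeval_X, MvPolynomial.aeval_C]
      change half + φ (MvPolynomial.X j) * y j - half = φ (MvPolynomial.X j) * y j
      ring
    · intro v hv
      have e1 : pol (MvPolynomial.X (Sum.inl j)) v = (v (Sum.inl j) : ℝ) := by
        simp [pol, coord]
      have e2 : pol (MvPolynomial.X (Sum.inr j) - MvPolynomial.C (1 / 2)) v
          = (v (Sum.inr j) : ℝ) - 1 / 2 := by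
        simp [pol, coord]
      rw [e1] at hv ⊢
      rw [e2]
      change _ = ((v (Sum.inr j) : ℝ) - 1 / 2) * (v (Sum.inl j) : ℝ)⁻¹ * (v (Sum.inl j) : ℝ)
      rw [mul_assoc, inv_mul_cancel₀ hv, mul_one]
  have gP : ∀ p, Good u (φ p) (fun v => MvPolynomial.eval (back v) p) := by
    intro p
    induction p using MvPolynomial.induction_on with
    | C c =>
      have : φ (MvPolynomial.C c) = algebraMap ℝ A c := φ.commutes c
      simpa only [this, MvPolynomial.eval_C] using Good.const (u := u) c
    | add p q hp hq => simpa only [map_add] using hp.add hq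
    | mul_X p i hp => simpa only [map_mul, MvPolynomial.eval_X] using hp.mul (gX i)
  have hmeas : ∀ p : MvPolynomial (Fin d) ℝ, Measurable fun x : Fin d → ℝ => MvPolynomial.eval x p :=
    fun p => (MvPolynomial.continuous_eval p).measurable
  refine ⟨ν.map back, ?_, ?_⟩
  · intro q hq
    rw [Measure.map_apply measurable_back (measurableSet_eq_fun (hmeas q) measurable_const)]
    have := hne _ _ (hunit q hq) (gP q)
    rw [ae_iff] at this
    simpa using this
  · intro p q hq'
    have g : Good u (Localization.mk p ⟨q, hq'⟩)
        (fun v => MvPolynomial.eval (back v) p / MvPolynomial.eval (back v) q) := by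
      obtain ⟨s, hs⟩ := (hunit q hq').exists_right_inv
      have e : (Localization.mk p ⟨q, hq'⟩ : A) = φ p * s := by
        have e1 : (Localization.mk p ⟨q, hq'⟩ : A) * φ q = φ p := by
          rw [Localization.mk_eq_mk']
          exact IsLocalization.mk'_spec A p ⟨q, hq'⟩
        linear_combination s * e1 - (Localization.mk p ⟨q, hq'⟩ : A) * hs
      rw [e]
      simpa only [div_eq_mul_inv] using (gP p).mul ((gP q).inv hs)
    obtain ⟨i1, i2⟩ := hrep _ _ g
    have hm : Measurable fun x : Fin d → ℝ => MvPolynomial.eval x p / MvPolynomial.eval x q :=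
      (hmeas p).div (hmeas q)
    constructor
    · rw [integrable_map_measure hm.aestronglyMeasurable measurable_back.aemeasurable]
      exact i1
    · rw [integral_map measurable_back.aemeasurable hm.aestronglyMeasurable]
      exact i2
end
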